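/- arXiv:2512.21298 — 4 statements merged into one kernel-verified Lean document; each statement's English description precedes it below -/
import Mathlib

section
/- Let k be a positive integer. If G is a finite simple graph of order n at least 2k+2 that has no k-degenerate cut, then the number of edges of G is at least (1/2)·(k + (13·√k)/190 − 1/38)·n. -/
/-- `S` is a (vertex) cut of `G`: deleting the vertices of `S` disconnects `G`. -/
def SimpleGraph.IsCutset {V : Type*} (G : SimpleGraph V) (S : Set V) : Prop :=
  ¬ (G.induce Sᶜ).Preconnected

/-- The set `S` induces a `k`-degenerate subgraph of `G`: every non-empty
subset `T` of `S` contains a vertex with at most `k` neighbors in `T`. -/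
def SimpleGraph.DegenSet {V : Type*} (G : SimpleGraph V) (k : ℕ) (S : Set V) : Prop :=
  ∀ T ⊆ S, T.Nonempty → ∃ v ∈ T, {w ∈ T | G.Adj v w}.ncard ≤ k

/-!
A set of vertices fails to be `k`-degenerate exactly when it contains a *core*: a nonempty set
inducing minimum degree at least `k + 1`. So if `G` has no `k`-degenerate cut, every cut contains
such a core.

Call a vertex high if its degree exceeds `k + √k / 4`, and low otherwise. If `v` is low, its
neighbourhood is a cut and contains a core; adding `v` gives a set `K` of about `k` vertices
inducing minimum degree `k + 2`, so a low vertex of `K` has fewer than `√k / 4` neighbours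
outside `K`. Take about `3 √k / 4` low vertices `A` of `K`, and let `O` be the set of their
neighbours outside `K`. Then `(K \ A) ∪ O` is a cut, and its core has at least about `√k / 2`
vertices in `O`, each with many neighbours in `K`. Counting the edges between these vertices and
the low vertices of `K` forces `K` to have at least `5 k / 8` high vertices, all of them neighbours
of `v`. Finally, high vertices send charge along edges to their low neighbours, which brings every
vertex to at least `k + 5 √k / 52`.
-/

open scoped Finset

section Core

variable {V : Type*} {G : SimpleGraph V} [DecidableRel G.Adj] {k : ℕ} {F : Finset V}

/-- `F` is nonempty and every vertex of `F` has at least `k` neighbours in `F`. Cores with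
parameter `k + 1` are the obstructions to `k`-degeneracy. In contrast to the usual `k`-core of a
graph, `F` need not be maximal. -/
def IsCore (G : SimpleGraph V) [DecidableRel G.Adj] (k : ℕ) (F : Finset V) : Prop :=
  F.Nonempty ∧ ∀ v ∈ F, k ≤ #{w ∈ F | G.Adj v w}

lemma IsCore.lt_card (hF : IsCore G k F) : k < #F := by
  obtain ⟨⟨v, hv⟩, hdeg⟩ := hF
  refine (hdeg v hv).trans_lt (Finset.card_lt_card ?_)
  exact Finset.filter_ssubset.2 ⟨v, hv, G.irrefl⟩

lemma IsCore.insert_of_forall_adj [DecidableEq V] (hF : IsCore G k F) {v : V}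
    (hv : ∀ w ∈ F, G.Adj v w) : IsCore G (k + 1) (insert v F) := by
  have hvF : v ∉ F := fun h ↦ G.irrefl (hv v h)
  refine ⟨Finset.insert_nonempty v F, fun w hw ↦ ?_⟩
  obtain rfl | hwF := Finset.mem_insert.1 hw
  · have : {x ∈ insert w F | G.Adj w x} = F := by
      rw [Finset.filter_insert, if_neg G.irrefl, Finset.filter_true_of_mem hv]
    rw [this]
    exact hF.lt_card
  · rw [Finset.filter_insert, if_pos (hv w hwF).symm, Finset.card_insert_of_notMem (by simp [hvF])]
    exact Nat.add_le_add_right (hF.2 w hwF) 1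

lemma IsCore.card_neighborFinset_sdiff_add_le_degree [Fintype V] [DecidableEq V]
    (hF : IsCore G k F) {w : V} (hw : w ∈ F) : #(G.neighborFinset w \ F) + k ≤ G.degree w := by
  have hinter : {x ∈ F | G.Adj w x} = G.neighborFinset w ∩ F := by
    ext x
    simp [and_comm]
  calc #(G.neighborFinset w \ F) + k
      ≤ #(G.neighborFinset w \ F) + #(G.neighborFinset w ∩ F) := by
        rw [← hinter]
        exact Nat.add_le_add_left (hF.2 w hw) _
    _ = G.degree w := by
        rw [Finset.card_sdiff_add_card_inter, G.card_neighborFinset_eq_degree]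

lemma exists_isCore_of_not_degenSet {S : Finset V} (hS : ¬ G.DegenSet k S) :
    ∃ F ⊆ S, IsCore G (k + 1) F := by
  simp only [SimpleGraph.DegenSet, not_forall, not_exists, not_and, not_le] at hS
  obtain ⟨T, hTS, hTne, hdeg⟩ := hS
  lift T to Finset V using S.finite_toSet.subset hTS
  refine ⟨T, Finset.coe_subset.1 hTS, hTne, fun v hv ↦ ?_⟩
  have hncard : ({w ∈ (T : Set V) | G.Adj v w}).ncard = #{w ∈ T | G.Adj v w} := by
    rw [← Set.ncard_coe_finset, Finset.coe_filter]
    rfl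
  rw [← hncard]
  exact hdeg v hv

end Core

section Cut

variable {V : Type*} {G : SimpleGraph V} {k : ℕ}

lemma isCutset_of_forall_adj_mem_union {A S : Set V} (hA : A.Nonempty) (hAS : Disjoint A S)
    (hne : A ∪ S ≠ Set.univ) (hadj : ∀ v ∈ A, ∀ w, G.Adj v w → w ∈ A ∪ S) : G.IsCutset S := by
  intro hconn
  obtain ⟨a, ha⟩ := hA
  obtain ⟨c, hc⟩ := (Set.ne_univ_iff_exists_notMem _).1 hne
  rw [Set.mem_union, not_or] at hc
  have hreach := hconn ⟨a, hAS.notMem_of_mem_left ha⟩ ⟨c, hc.2⟩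
  rw [SimpleGraph.reachable_iff_reflTransGen] at hreach
  have hclosed : ∀ y : (Sᶜ : Set V),
      Relation.ReflTransGen (G.induce Sᶜ).Adj ⟨a, hAS.notMem_of_mem_left ha⟩ y → (y : V) ∈ A := by
    intro y hy
    induction hy with
    | refl => exact ha
    | @tail y z _ hyz hyA => exact (hadj y hyA z hyz).resolve_right z.2
  exact hc.1 (hclosed _ hreach)

variable [Fintype V] [DecidableRel G.Adj]

lemma exists_isCore_of_forall_adj_mem_union [DecidableEq V]
    (hcut : ¬ ∃ S : Set V, G.IsCutset S ∧ G.DegenSet k S) {A S : Finset V} (hA : A.Nonempty)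
    (hAS : Disjoint A S) (hcard : #(A ∪ S) < Fintype.card V)
    (hadj : ∀ v ∈ A, ∀ w, G.Adj v w → w ∈ A ∪ S) : ∃ F ⊆ S, IsCore G (k + 1) F := by
  have hne : A ∪ S ≠ Finset.univ := (Finset.card_lt_iff_ne_univ _).1 hcard
  refine exists_isCore_of_not_degenSet fun hdegen ↦ hcut ⟨S, ?_, hdegen⟩
  refine isCutset_of_forall_adj_mem_union (A := A) (Finset.coe_nonempty.2 hA)
    (Finset.disjoint_coe.2 hAS) ?_ (by simpa using hadj)
  rwa [← Finset.coe_union, Ne, Finset.coe_eq_univ]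

lemma exists_isCore_subset_neighborFinset
    (hcut : ¬ ∃ S : Set V, G.IsCutset S ∧ G.DegenSet k S) {v : V}
    (hv : G.degree v + 1 < Fintype.card V) : ∃ F ⊆ G.neighborFinset v, IsCore G (k + 1) F := by
  classical
  refine exists_isCore_of_forall_adj_mem_union hcut (Finset.singleton_nonempty v) (by simp) ?_
    (by simp +contextual)
  calc #({v} ∪ G.neighborFinset v) ≤ #{v} + #(G.neighborFinset v) := Finset.card_union_le _ _
    _ = G.degree v + 1 := by
        rw [Finset.card_singleton, G.card_neighborFinset_eq_degree, add_comm]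
    _ < Fintype.card V := hv

lemma add_two_le_degree (hcut : ¬ ∃ S : Set V, G.IsCutset S ∧ G.DegenSet k S)
    (hn : k + 3 ≤ Fintype.card V) (v : V) : k + 2 ≤ G.degree v := by
  by_cases hv : G.degree v + 1 < Fintype.card V
  · obtain ⟨F, hF, hcore⟩ := exists_isCore_subset_neighborFinset hcut hv
    calc k + 2 ≤ #F := hcore.lt_card
      _ ≤ G.degree v := Finset.card_le_card hF
  · lia

variable [DecidableEq V]

lemma exists_isCore_subset_insert_neighborFinset
    (hcut : ¬ ∃ S : Set V, G.IsCutset S ∧ G.DegenSet k S) {v : V}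
    (hv : G.degree v + 1 < Fintype.card V) :
    ∃ K ⊆ insert v (G.neighborFinset v), IsCore G (k + 2) K := by
  obtain ⟨F, hF, hcore⟩ := exists_isCore_subset_neighborFinset hcut hv
  exact ⟨insert v F, Finset.insert_subset_insert v hF,
    hcore.insert_of_forall_adj fun w hw ↦ (G.mem_neighborFinset v w).1 (hF hw)⟩

/-- The neighbours outside `K` of the vertices in `A`. For `A ⊆ K`, deleting them together with
`K \ A` separates `A` from the rest of the graph. -/
def outerNeighbors (G : SimpleGraph V) [DecidableRel G.Adj] (K A : Finset V) : Finset V :=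
  A.biUnion fun w ↦ G.neighborFinset w \ K

lemma notMem_of_mem_outerNeighbors {K A : Finset V} {w : V} (hw : w ∈ outerNeighbors G K A) :
    w ∉ K := by
  obtain ⟨_, _, hw⟩ := Finset.mem_biUnion.1 hw
  exact (Finset.mem_sdiff.1 hw).2

lemma card_outerNeighbors_le {K A : Finset V} {b : ℝ}
    (hb : ∀ w ∈ A, (#(G.neighborFinset w \ K) : ℝ) ≤ b) : (#(outerNeighbors G K A) : ℝ) ≤ #A * b :=
  calc (#(outerNeighbors G K A) : ℝ) ≤ ∑ w ∈ A, (#(G.neighborFinset w \ K) : ℝ) := by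
        exact_mod_cast Finset.card_biUnion_le
    _ ≤ #A * b := by simpa only [nsmul_eq_mul] using Finset.sum_le_card_nsmul A _ b hb

lemma exists_isCore_subset_sdiff_union_outerNeighbors
    (hcut : ¬ ∃ S : Set V, G.IsCutset S ∧ G.DegenSet k S) {K A : Finset V} (hA : A.Nonempty)
    (hAK : A ⊆ K) (hcard : #K + #(outerNeighbors G K A) < Fintype.card V) :
    ∃ F ⊆ K \ A ∪ outerNeighbors G K A, IsCore G (k + 1) F := by
  have hunion : A ∪ (K \ A ∪ outerNeighbors G K A) = K ∪ outerNeighbors G K A := by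
    rw [← Finset.union_assoc, Finset.union_sdiff_of_subset hAK]
  refine exists_isCore_of_forall_adj_mem_union hcut hA ?_ ?_ fun v hv w hvw ↦ ?_
  · refine Finset.disjoint_union_right.2 ⟨Finset.disjoint_sdiff, ?_⟩
    exact Finset.disjoint_right.2 fun w hw hwA ↦ notMem_of_mem_outerNeighbors hw (hAK hwA)
  · rw [hunion]
    exact (Finset.card_union_le _ _).trans_lt hcard
  · rw [hunion, Finset.mem_union, or_iff_not_imp_left]
    intro hwK
    refine Finset.mem_biUnion.2 ⟨v, hv, Finset.mem_sdiff.2 ⟨?_, hwK⟩⟩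
    exact (G.mem_neighborFinset v w).2 hvw

end Cut

section CrossingEdges

variable {V : Type*} [Fintype V] [DecidableEq V] {G : SimpleGraph V} [DecidableRel G.Adj] {k : ℕ}
  {K A F : Finset V}

lemma IsCore.add_card_le_card_add_card_sdiff (hF : IsCore G (k + 1) F) (hAK : A ⊆ K)
    (hFS : F ⊆ K \ A ∪ outerNeighbors G K A) : k + 2 + #A ≤ #K + #(F \ K) := by
  have hinter : F ∩ K ⊆ K \ A := by
    intro w hw
    obtain ⟨hwF, hwK⟩ := Finset.mem_inter.1 hw
    exact (Finset.mem_union.1 (hFS hwF)).resolve_right fun h ↦ notMem_of_mem_outerNeighbors h hwK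
  have hF_card : k + 2 ≤ #F := hF.lt_card
  have hsplit : #(F \ K) + #(F ∩ K) = #F := Finset.card_sdiff_add_card_inter F K
  have hinter_card : #(F ∩ K) ≤ #(K \ A) := Finset.card_le_card hinter
  have hK_card : #(K \ A) + #A = #K := Finset.card_sdiff_add_card_eq_card hAK
  lia

lemma IsCore.add_one_le_card_outerNeighbors_add (hF : IsCore G (k + 1) F)
    (hFS : F ⊆ K \ A ∪ outerNeighbors G K A) (T : Finset V) {u : V} (hu : u ∈ F) :
    k + 1 ≤ #(outerNeighbors G K A) + #(K ∩ T) + #{l ∈ (K \ T) \ A | G.Adj u l} := by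
  have hsub : {w ∈ F | G.Adj u w} ⊆
      outerNeighbors G K A ∪ K ∩ T ∪ {l ∈ (K \ T) \ A | G.Adj u l} := by
    intro w hw
    obtain ⟨hwF, huw⟩ := Finset.mem_filter.1 hw
    have hwS := hFS hwF
    simp only [Finset.mem_union, Finset.mem_inter, Finset.mem_sdiff, Finset.mem_filter] at hwS ⊢
    tauto
  calc k + 1 ≤ #{w ∈ F | G.Adj u w} := hF.2 u hu
    _ ≤ _ := Finset.card_le_card hsub
    _ ≤ _ := Finset.card_union_le _ _
    _ ≤ _ := Nat.add_le_add_right (Finset.card_union_le _ _) _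

lemma IsCore.card_sdiff_mul_le (hF : IsCore G (k + 1) F)
    (hFS : F ⊆ K \ A ∪ outerNeighbors G K A) {T : Finset V} {b : ℝ}
    (hb : ∀ l ∈ K \ T, (#(G.neighborFinset l \ K) : ℝ) ≤ b) :
    #(F \ K) * ((k : ℝ) + 1 - #(outerNeighbors G K A) - #(K ∩ T)) ≤ #((K \ T) \ A) * b := by
  simp only [← nsmul_eq_mul]
  refine Finset.card_nsmul_le_card_nsmul G.Adj (fun u hu ↦ ?_) (fun l hl ↦ ?_)
  · have hdeg : ((k + 1 : ℕ) : ℝ) ≤ _ := Nat.cast_le.2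
      (hF.add_one_le_card_outerNeighbors_add hFS T (Finset.mem_sdiff.1 hu).1)
    push_cast at hdeg
    rw [Finset.bipartiteAbove]
    linarith
  · refine le_trans (Nat.cast_le.2 (Finset.card_le_card fun u hu ↦ ?_))
      (hb l (Finset.mem_sdiff.1 hl).1)
    obtain ⟨huFK, hul⟩ := (Finset.mem_bipartiteBelow _).1 hu
    exact Finset.mem_sdiff.2 ⟨(G.mem_neighborFinset l u).2 hul.symm, (Finset.mem_sdiff.1 huFK).2⟩

lemma crossing_inequality (hcut : ¬ ∃ S : Set V, G.IsCutset S ∧ G.DegenSet k S)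
    {T : Finset V} {b : ℝ} (hb : ∀ l ∈ K \ T, (#(G.neighborFinset l \ K) : ℝ) ≤ b)
    {x : ℕ} (hx_pos : 0 < x) (hx_le : x ≤ #(K \ T))
    (hcard : (#K : ℝ) + x * b < Fintype.card V) (hT : x * b + #(K ∩ T) ≤ (k : ℝ) + 1) :
    ((k : ℝ) + 2 + x - #K) * (k + 1 - x * b - #(K ∩ T)) ≤ (#K - x - #(K ∩ T)) * b := by
  obtain ⟨A, hAsub, rfl⟩ := Finset.exists_subset_card_eq hx_le
  have hAK : A ⊆ K := hAsub.trans Finset.sdiff_subset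
  have hO : (#(outerNeighbors G K A) : ℝ) ≤ #A * b :=
    card_outerNeighbors_le fun w hw ↦ hb w (hAsub hw)
  obtain ⟨F, hFS, hF⟩ := exists_isCore_subset_sdiff_union_outerNeighbors hcut
    (Finset.card_pos.1 hx_pos) hAK (by exact_mod_cast (add_le_add_right hO _).trans_lt hcard)
  have hU : (k : ℝ) + 2 + #A - #K ≤ #(F \ K) := by
    rw [sub_le_iff_le_add']
    exact_mod_cast hF.add_card_le_card_add_card_sdiff hAK hFS
  have hL : (#((K \ T) \ A) : ℝ) = #K - #A - #(K ∩ T) := by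
    have hA : #((K \ T) \ A) + #A = #(K \ T) := Finset.card_sdiff_add_card_eq_card hAsub
    have hK : #(K \ T) + #(K ∩ T) = #K := Finset.card_sdiff_add_card_inter K T
    rw [← hK, ← hA]
    push_cast
    ring
  calc ((k : ℝ) + 2 + #A - #K) * (k + 1 - #A * b - #(K ∩ T))
      ≤ #(F \ K) * (k + 1 - #A * b - #(K ∩ T)) :=
        mul_le_mul_of_nonneg_right hU (by linarith)
    _ ≤ #(F \ K) * (k + 1 - #(outerNeighbors G K A) - #(K ∩ T)) := by gcongr
    _ ≤ #((K \ T) \ A) * b := hF.card_sdiff_mul_le hFS hb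
    _ = (#K - #A - #(K ∩ T)) * b := by rw [hL]

end CrossingEdges

section HighDegree

variable {V : Type*} [Fintype V] {G : SimpleGraph V} [DecidableRel G.Adj] {k : ℕ}

/-- The vertices of degree greater than `t`, which give away charge in the discharging argument. The
threshold is real because it is taken to be `k + √k / 4`. -/
noncomputable def highDegreeVertices (G : SimpleGraph V) [DecidableRel G.Adj] (t : ℝ) : Finset V :=
  {w | t < G.degree w}

lemma mem_highDegreeVertices {t : ℝ} {w : V} : w ∈ highDegreeVertices G t ↔ t < G.degree w := by
  simp [highDegreeVertices]

variable [DecidableEq V]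

lemma mul_quarter_sub_two_le {q x : ℝ} (hq : 8 ≤ q) (hx : x ≤ 3 * q / 4 + 1) :
    x * (q / 4 - 2) ≤ 3 * q ^ 2 / 16 := by
  nlinarith

lemma five_eighths_le_of_crossing_inequality {q x κ η : ℝ} (hq : 8 ≤ q) (hx : 3 * q / 4 ≤ x)
    (hx' : x ≤ 3 * q / 4 + 1) (hκ : κ ≤ q ^ 2 + q / 4 + 1) (hη : η ≤ 13 * q ^ 2 / 16)
    (hcross : (q ^ 2 + 2 + x - κ) * (q ^ 2 + 1 - x * (q / 4 - 2) - η) ≤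
      (κ - x - η) * (q / 4 - 2)) : 5 * q ^ 2 / 8 ≤ η := by
  have hxb := mul_quarter_sub_two_le hq hx'
  have hchain : q / 2 * (13 * q ^ 2 / 16 - η) ≤ (q ^ 2 - η) * (q / 4) :=
    calc q / 2 * (13 * q ^ 2 / 16 - η)
        ≤ (q ^ 2 + 2 + x - κ) * (q ^ 2 + 1 - x * (q / 4 - 2) - η) := by
          apply mul_le_mul <;> linarith
      _ ≤ (κ - x - η) * (q / 4 - 2) := hcross
      _ ≤ (q ^ 2 - η) * (q / 4 - 2) := mul_le_mul_of_nonneg_right (by linarith) (by linarith)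
      _ ≤ (q ^ 2 - η) * (q / 4) := mul_le_mul_of_nonneg_left (by linarith) (by nlinarith)
  have hfactor : q * (5 * q ^ 2 / 8 - η) ≤ 0 := by linarith
  linarith [nonpos_of_mul_nonpos_right hfactor (by linarith)]

lemma IsCore.five_eighths_le_card_inter_highDegreeVertices
    (hcut : ¬ ∃ S : Set V, G.IsCutset S ∧ G.DegenSet k S) (hk : 16 ≤ √(k : ℝ))
    (hn : 5 * (k : ℝ) / 4 + 2 ≤ Fintype.card V) {K : Finset V} (hK : IsCore G (k + 2) K)
    (hK_card : (#K : ℝ) ≤ k + √k / 4 + 1) :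
    5 * (k : ℝ) / 8 ≤ #(K ∩ highDegreeVertices G (k + √k / 4)) := by
  set q := √(k : ℝ)
  set T := highDegreeVertices G (k + q / 4)
  have hqk : q ^ 2 = (k : ℝ) := Real.sq_sqrt k.cast_nonneg
  have h16 : 16 * q ≤ k := by nlinarith
  by_contra! hfew
  have houter : ∀ l ∈ K \ T, (#(G.neighborFinset l \ K) : ℝ) ≤ q / 4 - 2 := by
    intro l hl
    obtain ⟨hlK, hlT⟩ := Finset.mem_sdiff.1 hl
    have hlow : (G.degree l : ℝ) ≤ k + q / 4 := not_lt.1 (mt mem_highDegreeVertices.2 hlT)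
    have hdeg : (#(G.neighborFinset l \ K) : ℝ) + (k + 2) ≤ G.degree l := by
      exact_mod_cast hK.card_neighborFinset_sdiff_add_le_degree hlK
    linarith
  -- With the threshold `k + q / 4`, the size `3 q / 4` nearly optimises the final constant.
  obtain ⟨x, hx, hx'⟩ : ∃ x : ℕ, 3 * q / 4 ≤ x ∧ (x : ℝ) ≤ 3 * q / 4 + 1 :=
    ⟨⌈3 * q / 4⌉₊, Nat.le_ceil _, (Nat.ceil_lt_add_one (by linarith)).le⟩
  have hxb := mul_quarter_sub_two_le (by linarith) hx'
  have hx_pos : 0 < x := by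
    have : (0 : ℝ) < x := by linarith
    exact_mod_cast this
  have hx_le : x ≤ #(K \ T) := by
    have hK_lt : (k : ℝ) + 2 < #K := by exact_mod_cast hK.lt_card
    have hsplit : (#(K \ T) : ℝ) + #(K ∩ T) = #K := by
      exact_mod_cast Finset.card_sdiff_add_card_inter K T
    have : (x : ℝ) ≤ #(K \ T) := by linarith
    exact_mod_cast this
  have hcross := crossing_inequality hcut houter hx_pos hx_le (by linarith) (by linarith)
  rw [← hqk] at hcross hK_card
  linarith [five_eighths_le_of_crossing_inequality (by linarith) hx hx' hK_card (by linarith)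
    hcross]

lemma five_eighths_le_card_neighborFinset_inter_highDegreeVertices
    (hcut : ¬ ∃ S : Set V, G.IsCutset S ∧ G.DegenSet k S) (hk : 16 ≤ √(k : ℝ))
    (hn : 5 * (k : ℝ) / 4 + 2 ≤ Fintype.card V) {v : V} (hv : (G.degree v : ℝ) ≤ k + √k / 4) :
    5 * (k : ℝ) / 8 ≤ #(G.neighborFinset v ∩ highDegreeVertices G (k + √k / 4)) := by
  have hdeg : G.degree v + 1 < Fintype.card V := by
    have hsq : √(k : ℝ) ^ 2 = k := Real.sq_sqrt k.cast_nonneg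
    have : (G.degree v : ℝ) + 1 < Fintype.card V := by nlinarith
    exact_mod_cast this
  obtain ⟨K, hKsub, hK⟩ := exists_isCore_subset_insert_neighborFinset hcut hdeg
  have hK_card : (#K : ℝ) ≤ k + √k / 4 + 1 := by
    have : #K ≤ G.degree v + 1 := (Finset.card_le_card hKsub).trans (Finset.card_insert_le _ _)
    have : (#K : ℝ) ≤ G.degree v + 1 := by exact_mod_cast this
    linarith
  have hv_low : v ∉ highDegreeVertices G (k + √k / 4) := by
    rw [mem_highDegreeVertices]
    exact hv.not_gt
  have hsub : K ∩ highDegreeVertices G (k + √k / 4) ⊆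
      G.neighborFinset v ∩ highDegreeVertices G (k + √k / 4) := by
    rw [← Finset.insert_inter_of_notMem (s₁ := G.neighborFinset v) hv_low]
    exact Finset.inter_subset_inter hKsub subset_rfl
  exact (hK.five_eighths_le_card_inter_highDegreeVertices hcut hk hn hK_card).trans
    (Nat.cast_le.2 (Finset.card_le_card hsub))

end HighDegree

section Discharging

variable {V : Type*} [Fintype V] [DecidableEq V] {G : SimpleGraph V} [DecidableRel G.Adj]

lemma sum_card_neighborFinset_sdiff_eq_sum_compl (T : Finset V) :
    ∑ v ∈ T, #(G.neighborFinset v \ T) = ∑ v ∈ Tᶜ, #(G.neighborFinset v ∩ T) := by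
  have habove (v : V) : G.neighborFinset v \ T = Tᶜ.bipartiteAbove G.Adj v := by
    ext w
    simp [and_comm]
  have hbelow (v : V) : G.neighborFinset v ∩ T = T.bipartiteBelow G.Adj v := by
    ext w
    simp [and_comm, G.adj_comm]
  simp only [habove, hbelow]
  exact Finset.sum_card_bipartiteAbove_eq_sum_card_bipartiteBelow G.Adj

/-- Each vertex of degree `d > t` sends charge `1 - a / t` to each of its neighbours of degree at
most `t`, and so keeps at least `a d / t ≥ a`; everything is multiplied by `t` in the proof. -/
lemma mul_card_le_sum_degree {t a δ m : ℝ} (ha : 0 ≤ a) (ht : 0 < t) (hat : a ≤ t)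
    (hδ : ∀ v, δ ≤ G.degree v)
    (hm : ∀ v, (G.degree v : ℝ) ≤ t → m ≤ #(G.neighborFinset v ∩ highDegreeVertices G t))
    (hbalance : (a - δ) * t ≤ (t - a) * m) : a * Fintype.card V ≤ ∑ v, (G.degree v : ℝ) := by
  set T := highDegreeVertices G t
  have hhigh : ∀ v ∈ T, (t - a) * #(G.neighborFinset v \ T) ≤ t * (G.degree v - a) := by
    intro v hv
    have hvt : t < G.degree v := mem_highDegreeVertices.1 hv
    calc (t - a) * #(G.neighborFinset v \ T) ≤ (t - a) * G.degree v := by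
          refine mul_le_mul_of_nonneg_left (Nat.cast_le.2 ?_) (sub_nonneg.2 hat)
          exact Finset.card_le_card Finset.sdiff_subset
      _ ≤ t * (G.degree v - a) := by nlinarith
  have hlow : ∀ v ∈ Tᶜ, -((t - a) * #(G.neighborFinset v ∩ T)) ≤ t * (G.degree v - a) := by
    intro v hv
    have hvt : (G.degree v : ℝ) ≤ t :=
      not_lt.1 (mt mem_highDegreeVertices.2 (Finset.mem_compl.1 hv))
    have hcharge := mul_le_mul_of_nonneg_left (hm v hvt) (sub_nonneg.2 hat)
    have hdeg := mul_le_mul_of_nonneg_left (hδ v) ht.le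
    linarith
  have htransfer : ∑ v ∈ T, (#(G.neighborFinset v \ T) : ℝ) =
      ∑ v ∈ Tᶜ, (#(G.neighborFinset v ∩ T) : ℝ) := by
    exact_mod_cast sum_card_neighborFinset_sdiff_eq_sum_compl T
  have htotal : 0 ≤ t * ∑ v, ((G.degree v : ℝ) - a) :=
    calc 0 = ∑ v ∈ T, (t - a) * (#(G.neighborFinset v \ T) : ℝ) +
          ∑ v ∈ Tᶜ, -((t - a) * (#(G.neighborFinset v ∩ T) : ℝ)) := by
          rw [Finset.sum_neg_distrib, ← Finset.mul_sum, ← Finset.mul_sum, htransfer, add_neg_cancel]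
      _ ≤ ∑ v ∈ T, t * ((G.degree v : ℝ) - a) + ∑ v ∈ Tᶜ, t * ((G.degree v : ℝ) - a) :=
          add_le_add (Finset.sum_le_sum hhigh) (Finset.sum_le_sum hlow)
      _ = t * ∑ v, ((G.degree v : ℝ) - a) := by rw [Finset.sum_add_sum_compl, Finset.mul_sum]
  have hsum : 0 ≤ ∑ v, ((G.degree v : ℝ) - a) := nonneg_of_mul_nonneg_right htotal ht
  rw [Finset.sum_sub_distrib, Finset.sum_const, Finset.card_univ, nsmul_eq_mul] at hsum
  linarith

end Discharging

theorem stmt0_general {V : Type*} [Fintype V] (G : SimpleGraph V) [DecidableRel G.Adj]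
    (k : ℕ) (hn : 5 * k / 4 + 3 ≤ Fintype.card V)
    (hcut : ¬ ∃ S : Set V, G.IsCutset S ∧ G.DegenSet k S) :
    (1 / 2 : ℝ) * ((k : ℝ) + 5 * √k / 52) * Fintype.card V ≤ (#G.edgeFinset : ℝ) := by
  classical
  have hδ (v : V) : (k : ℝ) + 2 ≤ G.degree v := by
    exact_mod_cast add_two_le_degree hcut (by lia) v
  suffices hsum : ((k : ℝ) + 5 * √k / 52) * Fintype.card V ≤ ∑ v, (G.degree v : ℝ) by
    have hedges : ∑ v, (G.degree v : ℝ) = 2 * #G.edgeFinset := by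
      exact_mod_cast G.sum_degrees_eq_twice_card_edges
    linarith
  obtain hsmall | hlarge := lt_or_ge √(k : ℝ) 16
  · rw [mul_comm, ← nsmul_eq_mul]
    exact Finset.card_nsmul_le_sum _ _ _ fun v _ ↦ by linarith [hδ v]
  · have hsq : √(k : ℝ) ^ 2 = k := Real.sq_sqrt k.cast_nonneg
    have hn' : 5 * (k : ℝ) / 4 + 2 ≤ Fintype.card V := by
      have : 5 * k + 8 ≤ 4 * Fintype.card V := by lia
      have : 5 * (k : ℝ) + 8 ≤ 4 * Fintype.card V := by exact_mod_cast this
      linarith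
    exact mul_card_le_sum_degree (by positivity) (by positivity) (by linarith) hδ
      (fun v hv ↦ five_eighths_le_card_neighborFinset_inter_highDegreeVertices hcut hlarge hn' hv)
      (by nlinarith)

theorem stmt0 {V : Type*} [Fintype V] (G : SimpleGraph V) [DecidableRel G.Adj]
    (k : ℕ) (hk : 1 ≤ k) (hn : 2 * k + 2 ≤ Fintype.card V)
    (hcut : ¬ ∃ S : Set V, G.IsCutset S ∧ G.DegenSet k S) :
    (1 / 2 : ℝ) * ((k : ℝ) + 13 * Real.sqrt k / 190 - 1 / 38) * (Fintype.card V : ℝ)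
      ≤ (G.edgeFinset.card : ℝ) := by
  refine le_trans ?_ (stmt0_general G k (by lia) hcut)
  gcongr
  linarith [Real.sqrt_nonneg k]
end

section
/- If G is a finite simple graph of order n at least 5 that has no 2-degenerate cut, then the number of edges of G is at least (27n − 35)/10. -/
/-!
*Eliminating* a vertex `u` means deleting it and completing its neighbourhood to a clique. A cut of
the resulting graph is also a cut of `G`, so elimination creates no new degenerate cuts. If the
elimination of some vertex loses at least `3 > 27 / 10` edges, induction on the order applies.

Otherwise every vertex neighbourhood misses many edges. On the other hand, the neighbourhood of a
non-universal vertex is a cut, hence contains a non-empty set inducing minimum degree at least `3`.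
The two facts together force all degrees to be at least `5`, and they force the neighbourhood of a
vertex `u` of degree `5` to consist of a `K₄` and one further vertex with at most one neighbour in
that `K₄`. If a vertex `v` of this `K₄` had degree `5` as well, the neighbourhood of the edge `uv`
would be a 2-degenerate cut. So every vertex of degree `5` has four neighbours of degree at least
`6`, and double counting the edges between the two classes yields `27 n ≤ 10 m` for the order `n`
and the size `m`.
-/

open scoped Finset

/-- `G` has no `k`-degenerate cut. -/
def NoDegenCut {V : Type*} (G : SimpleGraph V) (k : ℕ) : Prop :=
  ¬ ∃ S : Set V, G.IsCutset S ∧ G.DegenSet k S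

/-- The edges missing from the neighbourhood of `u`, which are those added when `u` is eliminated,
as a graph on all vertices of `G`. -/
def fillGraph {V : Type*} (G : SimpleGraph V) (u : V) : SimpleGraph V where
  Adj a b := G.Adj u a ∧ G.Adj u b ∧ a ≠ b ∧ ¬ G.Adj a b
  symm := ⟨fun _ _ ⟨ha, hb, hne, hab⟩ => ⟨hb, ha, hne.symm, fun h => hab h.symm⟩⟩
  loopless := ⟨fun _ h => h.2.2.1 rfl⟩

theorem fillGraph_adj {V : Type*} {G : SimpleGraph V} {u a b : V} :
    (fillGraph G u).Adj a b ↔ G.Adj u a ∧ G.Adj u b ∧ a ≠ b ∧ ¬ G.Adj a b :=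
  Iff.rfl

instance {V : Type*} [DecidableEq V] (G : SimpleGraph V) [DecidableRel G.Adj] (u : V) :
    DecidableRel (fillGraph G u).Adj :=
  fun _ _ => decidable_of_iff _ fillGraph_adj.symm

/-- The graph obtained from `G` by eliminating `u`: delete `u` and make its neighbourhood a
clique. -/
abbrev eliminate {V : Type*} (G : SimpleGraph V) (u : V) : SimpleGraph ({u}ᶜ : Set V) :=
  (G ⊔ fillGraph G u).induce {u}ᶜ

section Cuts

variable {V W : Type*} {G : SimpleGraph V} {S : Set V} {k : ℕ}

theorem isCutset_iff_exists_separated : G.IsCutset S ↔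
    ∃ A : Set V, (∃ a ∈ A, a ∉ S) ∧ (∃ b ∉ A, b ∉ S) ∧
      ∀ a ∈ A, ∀ b ∉ A, G.Adj a b → a ∈ S ∨ b ∈ S := by
  constructor
  · intro hS
    simp only [SimpleGraph.IsCutset, SimpleGraph.Preconnected, not_forall] at hS
    obtain ⟨a, b, hab⟩ := hS
    refine ⟨{v | ∃ hv : v ∉ S, (G.induce Sᶜ).Reachable a ⟨v, hv⟩}, ⟨a, ⟨a.2, .rfl⟩, a.2⟩,
      ⟨b, fun ⟨_, h⟩ => hab h, b.2⟩, ?_⟩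
    rintro p ⟨hpS, hap⟩ q hq hpq
    by_contra! hS
    have hadj : (G.induce Sᶜ).Adj ⟨p, hpS⟩ ⟨q, hS.2⟩ := hpq
    exact hq ⟨hS.2, hap.trans hadj.reachable⟩
  · rintro ⟨A, ⟨a, haA, haS⟩, ⟨b, hbA, hbS⟩, hsep⟩ hconn
    obtain ⟨p⟩ := hconn ⟨a, haS⟩ ⟨b, hbS⟩
    obtain ⟨d, -, hfst, hsnd⟩ := p.exists_boundary_dart (Subtype.val ⁻¹' A) haA hbA
    exact (hsep _ hfst _ hsnd d.adj).elim d.fst.2 d.snd.2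

theorem isCutset_neighborSet {u v : V} (hne : v ≠ u) (hadj : ¬ G.Adj u v) :
    G.IsCutset (G.neighborSet u) :=
  isCutset_iff_exists_separated.mpr ⟨{u}, ⟨u, rfl, G.irrefl⟩, ⟨v, hne, hadj⟩, by
    rintro _ rfl b - hub
    exact .inr hub⟩

theorem isCutset_image_of_isCutset_eliminate {u : V} {S : Set ({u}ᶜ : Set V)}
    (hS : (eliminate G u).IsCutset S) : G.IsCutset (Subtype.val '' S) := by
  rw [isCutset_iff_exists_separated] at hS ⊢
  obtain ⟨A, ⟨a, haA, haS⟩, ⟨b, hbA, hbS⟩, hsep⟩ := hS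
  have hmem {B : Set ({u}ᶜ : Set V)} (v : ({u}ᶜ : Set V)) : (v : V) ∈ Subtype.val '' B ↔ v ∈ B :=
    Subtype.val_injective.mem_set_image
  -- `u` joins the side on which it has a neighbour; by construction there is at most one.
  by_cases hw : ∃ w ∈ A, w ∉ S ∧ G.Adj u w
  · obtain ⟨w, hwA, hwS, huw⟩ := hw
    refine ⟨insert u (Subtype.val '' A), ⟨a, .inr ((hmem a).2 haA), (hmem a).not.2 haS⟩,
      ⟨b, fun h => h.elim b.2 ((hmem b).not.2 hbA), (hmem b).not.2 hbS⟩, fun p hp q hq hpq => ?_⟩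
    obtain ⟨hqu, hqA⟩ := not_or.1 hq
    lift q to ({u}ᶜ : Set V) using hqu
    simp only [hmem] at hqA ⊢
    obtain rfl | ⟨p, hpA, rfl⟩ := hp
    · have hwq : (w : V) ≠ q := fun h => hqA (Subtype.ext h ▸ hwA)
      have hadj : (eliminate G p).Adj w q := or_iff_not_imp_left.2 fun h => ⟨huw, hpq, hwq, h⟩
      exact .inr ((hsep w hwA q hqA hadj).resolve_left hwS)
    · simpa only [hmem] using hsep p hpA q hqA (.inl hpq)
  · refine ⟨Subtype.val '' A, ⟨a, (hmem a).2 haA, (hmem a).not.2 haS⟩,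
      ⟨b, (hmem b).not.2 hbA, (hmem b).not.2 hbS⟩, ?_⟩
    rintro _ ⟨p, hpA, rfl⟩ q hqA hpq
    by_cases hqu : q = u
    · subst hqu
      by_contra! h
      exact hw ⟨p, hpA, (hmem p).not.1 h.1, hpq.symm⟩
    · lift q to ({u}ᶜ : Set V) using hqu
      simp only [hmem] at hqA ⊢
      exact hsep p hpA q hqA (.inl hpq)

theorem degenSet_image [Finite V] {H : SimpleGraph W} {f : V → W} (hf : f.Injective)
    (hle : H.comap f ≤ G) (hS : G.DegenSet k S) : H.DegenSet k (f '' S) := by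
  intro T hT hTne
  obtain ⟨T, hTS, rfl⟩ := Set.subset_image_iff.1 hT
  obtain ⟨v, hvT, hv⟩ := hS T hTS hTne.of_image
  refine ⟨f v, Set.mem_image_of_mem f hvT, ?_⟩
  calc {w ∈ f '' T | H.Adj (f v) w}.ncard
      ≤ (f '' {w ∈ T | G.Adj v w}).ncard := Set.ncard_le_ncard <| by
        rintro _ ⟨⟨w, hw, rfl⟩, hvw⟩
        exact ⟨w, ⟨hw, hle hvw⟩, rfl⟩
    _ ≤ k := (Set.ncard_image_of_injective _ hf).trans_le hv

theorem degenSet_of_ncard_le [Finite V] (hS : S.ncard ≤ k + 1) : G.DegenSet k S := by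
  rintro T hT ⟨v, hv⟩
  refine ⟨v, hv, ?_⟩
  have hlt : {w ∈ T | G.Adj v w}.ncard < T.ncard :=
    Set.ncard_lt_ncard ⟨Set.sep_subset _ _, fun h => G.irrefl (h hv).2⟩
  have hle : T.ncard ≤ S.ncard := Set.ncard_le_ncard hT
  lia

theorem degenSet_insert [Finite V] {v : V} (hv : {w ∈ S | G.Adj v w}.ncard ≤ k)
    (hS : G.DegenSet k S) : G.DegenSet k (insert v S) := by
  intro T hT hTne
  by_cases hvT : v ∈ T
  · refine ⟨v, hvT, le_trans (Set.ncard_le_ncard ?_) hv⟩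
    rintro w ⟨hw, hvw⟩
    exact ⟨(hT hw).resolve_left hvw.ne', hvw⟩
  · exact hS T ((Set.subset_insert_iff_of_notMem hvT).1 hT) hTne

theorem NoDegenCut.eliminate [Finite V] (hG : NoDegenCut G k) (u : V) :
    NoDegenCut (eliminate G u) k := fun ⟨S, hcut, hdegen⟩ =>
  hG ⟨Subtype.val '' S, isCutset_image_of_isCutset_eliminate hcut,
    degenSet_image Subtype.val_injective (fun _ _ h => Or.inl h) hdegen⟩

end Cuts

section Fintype

variable {V : Type*} [Fintype V] {G : SimpleGraph V} [DecidableRel G.Adj]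

theorem card_mul_le_two_mul_card_edgeFinset {d : ℕ} (hd : ∀ v, d ≤ G.degree v) :
    Fintype.card V * d ≤ 2 * #G.edgeFinset := by
  rw [← SimpleGraph.sum_degrees_eq_twice_card_edges]
  exact Finset.card_nsmul_le_sum Finset.univ _ d fun v _ => hd v

variable [DecidableEq V]

theorem card_edgeFinset_induce_compl_singleton_add_degree (G : SimpleGraph V)
    [DecidableRel G.Adj] (u : V) :
    #(G.induce {u}ᶜ).edgeFinset + G.degree u = #G.edgeFinset := by
  have hle : G.degree u ≤ #G.edgeFinset := by
    rw [← SimpleGraph.card_incidenceFinset_eq_degree]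
    exact Finset.card_le_card (G.incidenceFinset_subset u)
  rw [G.card_edgeFinset_induce_compl_singleton, G.card_edgeFinset_deleteIncidenceSet,
    Nat.sub_add_cancel hle]

theorem card_edgeFinset_eliminate_add_degree (G : SimpleGraph V) [DecidableRel G.Adj] (u : V) :
    #(eliminate G u).edgeFinset + G.degree u = #G.edgeFinset + #(fillGraph G u).edgeFinset := by
  have hdegree : (G ⊔ fillGraph G u).degree u = G.degree u := by
    simp only [← SimpleGraph.card_neighborFinset_eq_degree]
    congr 1
    ext w
    simp [fillGraph_adj]
  have hdisj : Disjoint G.edgeFinset (fillGraph G u).edgeFinset := by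
    rw [SimpleGraph.disjoint_edgeFinset, SimpleGraph.disjoint_left]
    exact fun a b hab hfill => hfill.2.2.2 hab
  rw [← hdegree, card_edgeFinset_induce_compl_singleton_add_degree,
    ← Finset.card_union_of_disjoint hdisj, ← SimpleGraph.edgeFinset_sup]
  congr!

theorem degree_fillGraph_add_card_inter {u v : V} (huv : G.Adj u v) :
    (fillGraph G u).degree v + #(G.neighborFinset u ∩ G.neighborFinset v) + 1 = G.degree u := by
  have hfill : (fillGraph G u).neighborFinset v =
      (G.neighborFinset u).erase v \ G.neighborFinset v := by
    ext w
    simp only [fillGraph_adj, SimpleGraph.mem_neighborFinset, Finset.mem_sdiff, Finset.mem_erase]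
    grind
  have hinter : G.neighborFinset u ∩ G.neighborFinset v =
      (G.neighborFinset u).erase v ∩ G.neighborFinset v := by
    ext w
    simp only [Finset.mem_inter, SimpleGraph.mem_neighborFinset, Finset.mem_erase]
    grind [SimpleGraph.Adj.ne]
  rw [← SimpleGraph.card_neighborFinset_eq_degree, hfill, hinter, Finset.card_sdiff_add_card_inter,
    Finset.card_erase_add_one (by simpa using huv), SimpleGraph.card_neighborFinset_eq_degree]

theorem card_edgeFinset_fillGraph_le_degree {u x : V}
    (hclique : G.IsClique ((G.neighborFinset u).erase x)) :
    #(fillGraph G u).edgeFinset ≤ (fillGraph G u).degree x := by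
  rw [← SimpleGraph.card_incidenceFinset_eq_degree]
  refine Finset.card_le_card fun e => ?_
  induction e with | _ a b
  intro he
  rw [SimpleGraph.mem_edgeFinset, SimpleGraph.mem_edgeSet] at he
  rw [SimpleGraph.mem_incidenceFinset, SimpleGraph.mk'_mem_incidenceSet_iff]
  obtain ⟨hua, hub, hne, hab⟩ := he
  refine ⟨⟨hua, hub, hne, hab⟩, ?_⟩
  by_contra! hx
  exact hab (hclique (by simp [hua, hx.1.symm]) (by simp [hub, hx.2.symm]) hne)

/-- Every vertex of `T` has at least `d` neighbours in `T`. The non-empty sets with this property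
for `d = k + 1` are the obstructions to `k`-degeneracy. -/
def HasMinDegreeOn (G : SimpleGraph V) [DecidableRel G.Adj] (d : ℕ) (T : Finset V) : Prop :=
  ∀ v ∈ T, d ≤ #(T ∩ G.neighborFinset v)

variable {T : Finset V} {d k : ℕ}

theorem inter_neighborFinset_subset_erase (T : Finset V) (v : V) :
    T ∩ G.neighborFinset v ⊆ T.erase v := by
  intro w
  simp only [Finset.mem_inter, SimpleGraph.mem_neighborFinset, Finset.mem_erase]
  exact fun ⟨hw, hvw⟩ => ⟨hvw.ne', hw⟩

theorem HasMinDegreeOn.lt_card (hT : HasMinDegreeOn G d T) (hne : T.Nonempty) : d < #T := by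
  obtain ⟨v, hv⟩ := hne
  calc d ≤ #(T ∩ G.neighborFinset v) := hT v hv
    _ ≤ #(T.erase v) := Finset.card_le_card (inter_neighborFinset_subset_erase T v)
    _ < #T := Finset.card_erase_lt_of_mem hv

theorem HasMinDegreeOn.isClique (hT : HasMinDegreeOn G d T) (hcard : #T ≤ d + 1) :
    G.IsClique T := by
  intro a ha b hb hab
  have hinter : T ∩ G.neighborFinset a = T.erase a := by
    refine Finset.eq_of_subset_of_card_le (inter_neighborFinset_subset_erase T a) ?_
    rw [Finset.card_erase_of_mem ha]
    have := hT a ha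
    lia
  have hmem : b ∈ T ∩ G.neighborFinset a := hinter ▸ Finset.mem_erase.2 ⟨hab.symm, hb⟩
  simpa using (Finset.mem_inter.1 hmem).2

theorem HasMinDegreeOn.two_mul_card_edgeFinset_fillGraph_le {u : V}
    (hu : HasMinDegreeOn G d (G.neighborFinset u)) :
    2 * #(fillGraph G u).edgeFinset + G.degree u * (d + 1) ≤ G.degree u * G.degree u := by
  have hsum : ∑ v ∈ G.neighborFinset u, (fillGraph G u).degree v =
      2 * #(fillGraph G u).edgeFinset := by
    rw [← SimpleGraph.sum_degrees_eq_twice_card_edges]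
    refine Finset.sum_subset (Finset.subset_univ _) fun v _ hv => ?_
    rw [SimpleGraph.degree_eq_zero]
    exact fun w hvw => hv (by simpa using hvw.1)
  calc 2 * #(fillGraph G u).edgeFinset + G.degree u * (d + 1)
      = ∑ v ∈ G.neighborFinset u, ((fillGraph G u).degree v + (d + 1)) := by
        simp [Finset.sum_add_distrib, hsum]
    _ ≤ ∑ _v ∈ G.neighborFinset u, G.degree u := Finset.sum_le_sum fun v hv => by
        have := degree_fillGraph_add_card_inter ((G.mem_neighborFinset u v).1 hv)
        have := hu v hv
        lia
    _ = G.degree u * G.degree u := by simp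

theorem exists_hasMinDegreeOn_of_not_degenSet {S : Set V} (hS : ¬ G.DegenSet k S) :
    ∃ T : Finset V, ↑T ⊆ S ∧ T.Nonempty ∧ HasMinDegreeOn G (k + 1) T := by
  classical
  simp only [SimpleGraph.DegenSet, not_forall, not_exists, not_and, not_le] at hS
  obtain ⟨T, hTS, hTne, hT⟩ := hS
  refine ⟨T.toFinset, by simpa using hTS, by simpa using hTne, fun v hv => ?_⟩
  have hcoe : {w ∈ T | G.Adj v w} = ↑(T.toFinset ∩ G.neighborFinset v) := by
    ext w
    simp
  have := hT v (by simpa using hv)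
  rwa [hcoe, Set.ncard_coe_finset] at this

theorem NoDegenCut.exists_hasMinDegreeOn_subset_neighborFinset (hG : NoDegenCut G k) {u : V}
    (hu : G.degree u + 1 < Fintype.card V) :
    ∃ T ⊆ G.neighborFinset u, T.Nonempty ∧ HasMinDegreeOn G (k + 1) T := by
  have hcard : #(insert u (G.neighborFinset u)) < Fintype.card V := by
    rwa [Finset.card_insert_of_notMem (by simp), SimpleGraph.card_neighborFinset_eq_degree]
  obtain ⟨v, -, hv⟩ := Finset.exists_mem_notMem_of_card_lt_card hcard
  rw [Finset.mem_insert, not_or, SimpleGraph.mem_neighborFinset] at hv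
  have hS : ¬ G.DegenSet k (G.neighborSet u) := fun h => hG ⟨_, isCutset_neighborSet hv.1 hv.2, h⟩
  obtain ⟨T, hTu, hT⟩ := exists_hasMinDegreeOn_of_not_degenSet hS
  exact ⟨T, fun v hv => by simpa using hTu hv, hT⟩

theorem NoDegenCut.add_two_le_degree {V : Type*} [Fintype V] {G : SimpleGraph V}
    [DecidableRel G.Adj] (hG : NoDegenCut G k) (hn : k + 2 < Fintype.card V) (u : V) :
    k + 2 ≤ G.degree u := by
  classical
  by_contra! hlt
  obtain ⟨T, hTu, hTne, hT⟩ := hG.exists_hasMinDegreeOn_subset_neighborFinset (u := u) (by lia)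
  have hcard := Finset.card_le_card hTu
  rw [SimpleGraph.card_neighborFinset_eq_degree] at hcard
  have := hT.lt_card hTne
  lia

theorem NoDegenCut.hasMinDegreeOn_neighborFinset_or_exists_isClique_erase (hG : NoDegenCut G k)
    {u : V} (hn : G.degree u + 1 < Fintype.card V) (hu : G.degree u ≤ k + 3) :
    HasMinDegreeOn G (k + 1) (G.neighborFinset u) ∨
      G.degree u = k + 3 ∧ ∃ x, G.Adj u x ∧ G.IsClique ((G.neighborFinset u).erase x) := by
  obtain ⟨T, hTu, hTne, hT⟩ := hG.exists_hasMinDegreeOn_subset_neighborFinset hn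
  obtain rfl | hssubset := hTu.eq_or_ssubset
  · exact .inl hT
  have hlt := Finset.card_lt_card hssubset
  have hcard := hT.lt_card hTne
  rw [SimpleGraph.card_neighborFinset_eq_degree] at hlt
  obtain ⟨x, hxT, hinsert⟩ := Finset.exists_eq_insert_iff.2
    ⟨hTu, show #T + 1 = #(G.neighborFinset u) by
      rw [SimpleGraph.card_neighborFinset_eq_degree]; lia⟩
  refine .inr ⟨by lia, x, ?_, ?_⟩
  · rw [← SimpleGraph.mem_neighborFinset, ← hinsert]
    exact Finset.mem_insert_self x T
  · rw [← hinsert, Finset.erase_insert hxT]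
    exact hT.isClique (by lia)

/-- The neighbourhood of `u` is a clique together with one vertex `x` that has at most one
neighbour in this clique. This is the shape of the neighbourhoods of the vertices of degree `5` that
the induction cannot eliminate. -/
structure IsLooseNeighbor (G : SimpleGraph V) [DecidableRel G.Adj] (u x : V) : Prop where
  adj : G.Adj u x
  isClique_erase : G.IsClique ((G.neighborFinset u).erase x)
  card_inter_le_one : #(G.neighborFinset u ∩ G.neighborFinset x) ≤ 1

section LooseNeighbor

variable {u v x y : V}

theorem IsLooseNeighbor.insert_erase_erase_eq (hx : IsLooseNeighbor G u x)
    (hy : IsLooseNeighbor G v y) (huv : G.Adj u v) (hvx : v ≠ x)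
    (hdeg : G.degree u = G.degree v) (hu : 4 ≤ G.degree u) :
    insert u (((G.neighborFinset u).erase x).erase v) = (G.neighborFinset v).erase y := by
  set K := ((G.neighborFinset u).erase x).erase v with hK
  have hmemK {w} : w ∈ K ↔ w ≠ v ∧ w ≠ x ∧ G.Adj u w := by simp [hK]
  have hKcard : #(insert u K) + 1 = G.degree u := by
    rw [Finset.card_insert_of_notMem (by simp [hK]), hK,
      Finset.card_erase_add_one (by simp [hvx, huv]),
      Finset.card_erase_add_one (by simpa using hx.adj), SimpleGraph.card_neighborFinset_eq_degree]
  have hKv : insert u K ⊆ G.neighborFinset v := by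
    intro w hw
    rw [SimpleGraph.mem_neighborFinset]
    obtain rfl | hw := Finset.mem_insert.1 hw
    · exact huv.symm
    · obtain ⟨hwv, hwx, huw⟩ := hmemK.1 hw
      exact hx.isClique_erase (by simp [hvx, huv]) (by simp [hwx, huw]) hwv.symm
  have hclique : G.IsClique (insert u K : Finset V) := by
    rw [Finset.coe_insert, SimpleGraph.isClique_insert]
    exact ⟨hx.isClique_erase.subset (by simp [hK]), fun w hw _ => (hmemK.1 hw).2.2⟩
  have hyK : y ∉ insert u K := by
    intro hyK
    have hsub : (insert u K).erase y ⊆ G.neighborFinset v ∩ G.neighborFinset y := by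
      intro w hw
      obtain ⟨hwy, hwK⟩ := Finset.mem_erase.1 hw
      exact Finset.mem_inter.2 ⟨hKv hwK, by simpa using hclique hyK hwK hwy.symm⟩
    have hle := (Finset.card_le_card hsub).trans hy.card_inter_le_one
    rw [Finset.card_erase_of_mem hyK] at hle
    lia
  refine Finset.eq_of_subset_of_card_le (Finset.subset_erase.2 ⟨hKv, hyK⟩) ?_
  rw [Finset.card_erase_of_mem (by simpa using hy.adj), SimpleGraph.card_neighborFinset_eq_degree]
  lia

theorem IsLooseNeighbor.exists_adj_not_adj (hx : IsLooseNeighbor G u x) (hdeg : 4 ≤ G.degree x)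
    (y : V) : ∃ b, G.Adj x b ∧ b ≠ u ∧ b ≠ y ∧ ¬ G.Adj u b := by
  have hcard : #({u, y} ∪ G.neighborFinset u ∩ G.neighborFinset x) < #(G.neighborFinset x) := by
    have := Finset.card_union_le {u, y} (G.neighborFinset u ∩ G.neighborFinset x)
    have := Finset.card_le_two (a := u) (b := y)
    have := hx.card_inter_le_one
    rw [SimpleGraph.card_neighborFinset_eq_degree]
    lia
  obtain ⟨b, hxb, hb⟩ := Finset.exists_mem_notMem_of_card_lt_card hcard
  simp only [Finset.mem_union, Finset.mem_insert, Finset.mem_singleton, Finset.mem_inter,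
    SimpleGraph.mem_neighborFinset] at hxb hb
  exact ⟨b, hxb, by tauto⟩

theorem IsLooseNeighbor.degenSet_insert_insert (hx : IsLooseNeighbor G u x)
    (hy : IsLooseNeighbor G v y) {K : Finset V} (hKu : K ⊆ G.neighborFinset u)
    (hKv : K ⊆ G.neighborFinset v) (hK : #K ≤ 3) : G.DegenSet 2 (insert x (insert y K)) := by
  refine degenSet_insert ?_ (degenSet_insert ?_ (degenSet_of_ncard_le (by simpa using hK)))
  · calc {w ∈ insert y (K : Set V) | G.Adj x w}.ncard
        ≤ #(insert y (G.neighborFinset u ∩ G.neighborFinset x)) := by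
          rw [← Set.ncard_coe_finset]
          refine Set.ncard_le_ncard ?_
          rintro w ⟨rfl | hw, hxw⟩
          · simp
          · exact Finset.mem_insert_of_mem (by simpa [hxw] using hKu hw)
      _ ≤ 2 := (Finset.card_insert_le _ _).trans (Nat.succ_le_succ hx.card_inter_le_one)
  · calc {w ∈ (K : Set V) | G.Adj y w}.ncard
        ≤ #(G.neighborFinset v ∩ G.neighborFinset y) := by
          rw [← Set.ncard_coe_finset]
          exact Set.ncard_le_ncard fun w ⟨hw, hyw⟩ => by simpa [hyw] using hKv hw
      _ ≤ 2 := hy.card_inter_le_one.trans one_le_two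

theorem NoDegenCut.eq_of_isLooseNeighbor (hG : NoDegenCut G 2) (hx : IsLooseNeighbor G u x)
    (hy : IsLooseNeighbor G v y) (huv : G.Adj u v) (hu : G.degree u = 5) (hv : G.degree v = 5)
    (hdegx : 4 ≤ G.degree x) : v = x := by
  by_contra hvx
  set K := ((G.neighborFinset u).erase x).erase v with hK
  have hmemK {w : V} : w ∈ K ↔ w ≠ v ∧ w ≠ x ∧ G.Adj u w := by simp [hK]
  have hNv : insert u K = (G.neighborFinset v).erase y :=
    hx.insert_erase_erase_eq hy huv hvx (hu.trans hv.symm) (by lia)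
  have hmemNv {w : V} : w = u ∨ w ∈ K ↔ w ≠ y ∧ G.Adj v w := by
    simpa using Finset.ext_iff.1 hNv w
  have hadj_u {w : V} (huw : G.Adj u w) : w = v ∨ w = x ∨ w ∈ K := by grind
  have hadj_v {w : V} (hvw : G.Adj v w) : w = u ∨ w = y ∨ w ∈ K := by grind
  have hKcard : #K = 3 := by
    rw [hK, Finset.card_erase_of_mem (by simp [hvx, huv]),
      Finset.card_erase_of_mem (by simpa using hx.adj), SimpleGraph.card_neighborFinset_eq_degree,
      hu]
  obtain ⟨b, hxb, hbu, hby, hub⟩ := hx.exists_adj_not_adj hdegx y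
  have huy : u ≠ y := (hmemNv.1 (.inl rfl)).1
  refine hG ⟨insert x (insert y K), isCutset_iff_exists_separated.2 ⟨{u, v},
    ⟨u, .inl rfl, ?_⟩, ⟨b, ?_, ?_⟩, ?_⟩, hx.degenSet_insert_insert hy ?_ ?_ hKcard.le⟩
  · simp [hmemK, hx.adj.ne, huy]
  · rintro (rfl | rfl)
    exacts [hbu rfl, hub huv]
  · simp [hmemK, hxb.ne', hby, hub]
  · intro a ha w hw haw
    simp only [Set.mem_insert_iff, Set.mem_singleton_iff, Finset.mem_coe] at ha hw ⊢
    obtain rfl | rfl := ha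
    · have := hadj_u haw
      tauto
    · have := hadj_v haw
      tauto
  · exact fun w hw => by simpa using (hmemK.1 hw).2.2
  · exact fun w hw => by simpa using (hmemNv.1 (.inr hw)).2

end LooseNeighbor

/-- Eliminating a vertex of `G` never loses three edges or more. A counterexample of minimal order
has this property because `27 / 10 < 3`. -/
def IsEliminationIrreducible (G : SimpleGraph V) [DecidableRel G.Adj] : Prop :=
  ∀ u, G.degree u < #(fillGraph G u).edgeFinset + 3

namespace IsEliminationIrreducible

theorem five_le_degree (hI : IsEliminationIrreducible G) (hG : NoDegenCut G 2)
    (hn : 6 ≤ Fintype.card V) (u : V) : 5 ≤ G.degree u := by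
  by_contra! hlt
  have hu : G.degree u = 4 := by
    have := hG.add_two_le_degree (by lia) u
    lia
  have hfill := hI u
  obtain hmin | ⟨hu', -⟩ :=
    hG.hasMinDegreeOn_neighborFinset_or_exists_isClique_erase (u := u) (by lia) (by lia)
  · have := hmin.two_mul_card_edgeFinset_fillGraph_le
    rw [hu] at this hfill
    lia
  · lia

theorem exists_isLooseNeighbor (hI : IsEliminationIrreducible G) (hG : NoDegenCut G 2)
    (hn : 7 ≤ Fintype.card V) {u : V} (hu : G.degree u = 5) : ∃ x, IsLooseNeighbor G u x := by
  have hfill := hI u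
  obtain hmin | ⟨-, x, hux, hclique⟩ :=
    hG.hasMinDegreeOn_neighborFinset_or_exists_isClique_erase (u := u) (by lia) (by lia)
  · have := hmin.two_mul_card_edgeFinset_fillGraph_le
    rw [hu] at this hfill
    lia
  · refine ⟨x, hux, hclique, ?_⟩
    have := card_edgeFinset_fillGraph_le_degree hclique
    have := degree_fillGraph_add_card_inter hux
    lia

theorem four_le_card_neighborFinset_sdiff (hI : IsEliminationIrreducible G) (hG : NoDegenCut G 2)
    (hn : 7 ≤ Fintype.card V) {u : V} (hu : G.degree u = 5) :
    4 ≤ #(G.neighborFinset u \ ({v | G.degree v = 5} : Finset V)) := by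
  obtain ⟨x, hx⟩ := hI.exists_isLooseNeighbor hG hn hu
  have hsub : (G.neighborFinset u).erase x ⊆
      G.neighborFinset u \ ({v | G.degree v = 5} : Finset V) := by
    intro v hv
    obtain ⟨hvx, huv⟩ := Finset.mem_erase.1 hv
    refine Finset.mem_sdiff.2 ⟨huv, fun hv5 => hvx ?_⟩
    have hv5 : G.degree v = 5 := by simpa using hv5
    obtain ⟨y, hy⟩ := hI.exists_isLooseNeighbor hG hn hv5
    exact hG.eq_of_isLooseNeighbor hx hy (by simpa using huv) hu hv5
      (hG.add_two_le_degree (by lia) x)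
  calc 4 = #((G.neighborFinset u).erase x) := by
        rw [Finset.card_erase_of_mem (by simpa using hx.adj),
          SimpleGraph.card_neighborFinset_eq_degree, hu]
    _ ≤ _ := Finset.card_le_card hsub

end IsEliminationIrreducible

theorem card_mul_le_sum_degree_compl (A : Finset V) {m : ℕ}
    (hA : ∀ u ∈ A, m ≤ #(G.neighborFinset u \ A)) : #A * m ≤ ∑ v ∈ Aᶜ, G.degree v := by
  calc #A * m ≤ ∑ u ∈ A, #(Finset.bipartiteAbove G.Adj Aᶜ u) := by
        refine Finset.card_nsmul_le_sum A _ m fun u hu => (hA u hu).trans_eq ?_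
        congr 1
        ext w
        simp [and_comm]
    _ = ∑ v ∈ Aᶜ, #(Finset.bipartiteBelow G.Adj A v) :=
        Finset.sum_card_bipartiteAbove_eq_sum_card_bipartiteBelow _
    _ ≤ ∑ v ∈ Aᶜ, G.degree v := Finset.sum_le_sum fun v _ => by
        rw [← SimpleGraph.card_neighborFinset_eq_degree]
        refine Finset.card_le_card fun w hw => ?_
        simpa using ((Finset.mem_bipartiteBelow _).1 hw).2.symm

theorem IsEliminationIrreducible.mul_card_le_mul_card_edgeFinset (hI : IsEliminationIrreducible G)
    (hG : NoDegenCut G 2) (hn : 7 ≤ Fintype.card V) :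
    27 * Fintype.card V ≤ 10 * #G.edgeFinset := by
  set A : Finset V := {v | G.degree v = 5} with hA
  have hsum : ∑ v ∈ A, G.degree v + ∑ v ∈ Aᶜ, G.degree v = 2 * #G.edgeFinset := by
    rw [Finset.sum_add_sum_compl, SimpleGraph.sum_degrees_eq_twice_card_edges]
  have hcard : #A + #Aᶜ = Fintype.card V := Finset.card_add_card_compl A
  have hsumA : ∑ v ∈ A, G.degree v = #A * 5 :=
    Finset.sum_const_nat fun v hv => by simpa [hA] using hv
  have hcross : #A * 4 ≤ ∑ v ∈ Aᶜ, G.degree v := card_mul_le_sum_degree_compl A fun u hu =>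
    hI.four_le_card_neighborFinset_sdiff hG hn (by simpa [hA] using hu)
  have hsumCompl : #Aᶜ * 6 ≤ ∑ v ∈ Aᶜ, G.degree v :=
    Finset.card_nsmul_le_sum _ _ 6 fun v hv => by
      have hne : G.degree v ≠ 5 := by simpa [hA] using hv
      have := hI.five_le_degree hG (by lia) v
      lia
  lia

theorem NoDegenCut.mul_card_le_mul_card_edgeFinset_add {V : Type*} [Fintype V] {G : SimpleGraph V}
    [DecidableRel G.Adj] (hG : NoDegenCut G 2) (hn : 5 ≤ Fintype.card V) :
    27 * Fintype.card V ≤ 10 * #G.edgeFinset + 35 := by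
  classical
  obtain hn5 | hn6 : Fintype.card V = 5 ∨ 6 ≤ Fintype.card V := by lia
  · have := card_mul_le_two_mul_card_edgeFinset (hG.add_two_le_degree (by lia))
    lia
  by_cases hI : IsEliminationIrreducible G
  · obtain hn6 | hn7 : Fintype.card V = 6 ∨ 7 ≤ Fintype.card V := by lia
    · have := card_mul_le_two_mul_card_edgeFinset (hI.five_le_degree hG hn6.ge)
      lia
    · have := hI.mul_card_le_mul_card_edgeFinset hG hn7
      lia
  · simp only [IsEliminationIrreducible, not_forall, not_lt] at hI
    obtain ⟨u, hu⟩ := hI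
    have hcard : Fintype.card ({u}ᶜ : Set V) + 1 = Fintype.card V := by
      rw [Fintype.card_compl_set, Set.card_singleton]
      lia
    have := (hG.eliminate u).mul_card_le_mul_card_edgeFinset_add (by lia)
    have := card_edgeFinset_eliminate_add_degree G u
    lia
termination_by Fintype.card V
decreasing_by lia

end Fintype

theorem stmt1 {V : Type*} [Fintype V] (G : SimpleGraph V) [DecidableRel G.Adj]
    (hn : 5 ≤ Fintype.card V)
    (hcut : ¬ ∃ S : Set V, G.IsCutset S ∧ G.DegenSet 2 S) :
    (27 * (Fintype.card V : ℝ) - 35) / 10 ≤ (G.edgeFinset.card : ℝ) := by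
  have hbound : 27 * Fintype.card V ≤ 10 * #G.edgeFinset + 35 :=
    NoDegenCut.mul_card_le_mul_card_edgeFinset_add hcut hn
  have hbound_real : 27 * (Fintype.card V : ℝ) ≤ 10 * (#G.edgeFinset : ℝ) + 35 := by
    exact_mod_cast hbound
  linarith
end

section
/- Let k be an integer at least 2. If G is a connected finite simple graph of order n at least k+6 and size m at most ((k+3)/2)·n + (k−1)/2, then G has a minimum cut S such that the subgraph of G induced by S is k-degenerate. -/
/-!
Suppose that no minimum cut is `k`-degenerate, and let `c` be the size of a minimum cut. Then every
minimum cut has a subset inducing minimum degree at least `k + 1`, so `c ≥ k + 2`. As all degrees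
are at least `c`, the bound on the size leaves only `c = k + 3` and `c = k + 2`.

The main tool is local: a vertex `w` of a minimum cut `W` has neighbours on every side of `W`, so
`deg w` exceeds the number of neighbours of `w` in `U ∪ W` for any union `U` of components of
`G - W` other than all of them.

If `c = k + 3`, fewer than `k` vertices have degree above `c`. Hence there are adjacent `u`, `v` of
degree `c` with `k + 1` common neighbours, and `N(u) ∪ N(v)` without `u` and `v` is again a minimum
cut. It has a dense subset containing a common neighbour of `u` and `v` of degree `c`, which
contradicts the local bound.

If `c = k + 2`, every minimum cut is a clique. Call a vertex low if its degree is `c` and high if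
its degree is at least `c + 2`. All but at most one of the neighbours of a low vertex are high, and
a high vertex of degree `c + 1 + e` has at most `2 * e` low neighbours. Double counting edges
between low and high vertices leaves at most two low vertices, and these few cases are excluded by
hand.
-/

open Finset

/-- `W` separates the nonempty vertex set `U` from some further vertex: `U` is a union of
components of `G - W`, but not of all of them. -/
structure IsSeparation {V : Type*} (G : SimpleGraph V) (U W : Finset V) : Prop where
  nonempty : U.Nonempty
  disjoint : Disjoint U W
  mem_or_mem_of_adj : ∀ ⦃u x⦄, u ∈ U → G.Adj u x → x ∈ U ∨ x ∈ W
  exists_notMem : ∃ z, z ∉ U ∧ z ∉ W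

/-- `W` is a minimum cut of `G`, and `U` is one side of it. -/
structure IsMinSeparation {V : Type*} (G : SimpleGraph V) (U W : Finset V) : Prop
    extends IsSeparation G U W where
  card_le : ∀ ⦃U' W'⦄, IsSeparation G U' W' → #W ≤ #W'

/-- The neighbours of `b` of degree `d`; for `d` the size of a minimum cut these are the low
neighbours of `b`. -/
def neighborsOfDegree {V : Type*} [Fintype V] (G : SimpleGraph V) [DecidableRel G.Adj] (b : V)
    (d : ℕ) : Finset V :=
  {y ∈ G.neighborFinset b | G.degree y = d}

/-- Every minimum cut of `G` is a clique. -/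
def MinCutsAreCliques {V : Type*} (G : SimpleGraph V) : Prop :=
  ∀ ⦃U W⦄, IsMinSeparation G U W → G.IsClique (W : Set V)

section Cutset

variable {V : Type*} {G : SimpleGraph V}

theorem IsSeparation.isCutset {U W : Finset V} (h : IsSeparation G U W) :
    G.IsCutset (W : Set V) := by
  obtain ⟨u, hu⟩ := h.nonempty
  obtain ⟨z, hzU, hzW⟩ := h.exists_notMem
  have mem_of_walk : ∀ a b : ((W : Set V)ᶜ : Set V), (G.induce (W : Set V)ᶜ).Walk a b →
      (a : V) ∈ U → (b : V) ∈ U := by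
    intro a b p
    induction p with
    | nil => exact id
    | @cons _ b _ hab _ ih =>
      exact fun ha => ih ((h.mem_or_mem_of_adj ha hab).resolve_right b.2)
  intro hconn
  obtain ⟨p⟩ := hconn ⟨u, disjoint_left.1 h.disjoint hu⟩ ⟨z, hzW⟩
  exact hzU (mem_of_walk _ _ p hu)

theorem exists_isSeparation_of_isCutset [Finite V] {S : Finset V}
    (h : G.IsCutset (S : Set V)) : ∃ U, IsSeparation G U S := by
  classical
  have := Fintype.ofFinite V
  simp only [SimpleGraph.IsCutset, SimpleGraph.Preconnected, not_forall] at h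
  obtain ⟨x, y, hxy⟩ := h
  let component : Finset V :=
    {a | ∃ ha : a ∈ (S : Set V)ᶜ, (G.induce (S : Set V)ᶜ).Reachable x ⟨a, ha⟩}
  have mem_component (a : V) : a ∈ component ↔
      ∃ ha : a ∈ (S : Set V)ᶜ, (G.induce (S : Set V)ᶜ).Reachable x ⟨a, ha⟩ := by
    simp [component]
  refine ⟨component, ⟨x, (mem_component _).2 ⟨x.2, .refl _⟩⟩, ?_, ?_, y, ?_, y.2⟩
  · exact disjoint_left.2 fun a ha => ((mem_component a).1 ha).1
  · intro u z hu huz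
    obtain ⟨huS, hreach⟩ := (mem_component u).1 hu
    by_cases hz : z ∈ S
    · exact .inr hz
    · refine .inl ((mem_component z).2 ⟨hz, hreach.trans (SimpleGraph.Adj.reachable ?_)⟩)
      exact huz
  · exact fun hy => hxy ((mem_component _).1 hy).2

theorem IsMinSeparation.card_le_ncard_of_isCutset [Finite V] {U W : Finset V}
    (h : IsMinSeparation G U W) {S : Set V} (hS : G.IsCutset S) : #W ≤ S.ncard := by
  obtain ⟨S, rfl⟩ := S.toFinite.exists_finset_coe
  obtain ⟨U', hU'⟩ := exists_isSeparation_of_isCutset hS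
  exact (h.card_le hU').trans_eq (Set.ncard_coe_finset S).symm

theorem IsSeparation.exists_isMinSeparation {U W : Finset V} (h : IsSeparation G U W) :
    ∃ U W, IsMinSeparation G U W := by
  obtain ⟨⟨U', W'⟩, hsep, hmin⟩ :=
    exists_minimalFor_of_wellFoundedLT (fun p : Finset V × Finset V => IsSeparation G p.1 p.2)
      (fun p => #p.2) ⟨(U, W), h⟩
  refine ⟨U', W', hsep, fun U₁ W₁ h₁ => ?_⟩
  exact (le_total _ _).elim id fun hle => hmin (j := (U₁, W₁)) h₁ hle

theorem IsMinSeparation.of_card_le {U W U' W' : Finset V} (h : IsMinSeparation G U W)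
    (h' : IsSeparation G U' W') (hle : #W' ≤ #W) : IsMinSeparation G U' W' :=
  ⟨h', fun _ _ hsep => hle.trans (h.card_le hsep)⟩

end Cutset

section Exchange

variable {V : Type*} [DecidableEq V] {G : SimpleGraph V} {U W : Finset V}

theorem IsSeparation.exchange (h : IsSeparation G U W) (hU : 1 < #U) {x : V} (hx : x ∈ U)
    {R : Finset V} (hR : ∀ w ∈ R, ∀ y ∈ U, G.Adj w y → y = x) :
    IsSeparation G (U.erase x) (insert x (W \ R)) := by
  have hdisj := disjoint_left.1 h.disjoint
  obtain ⟨z, hzU, hzW⟩ := h.exists_notMem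
  have hzx : z ≠ x := fun hzx => hzU (hzx ▸ hx)
  refine ⟨?_, ?_, ?_, z, by simp [hzU], by simp [hzW, hzx]⟩
  · rw [← card_pos, card_erase_of_mem hx]
    omega
  · refine disjoint_left.2 fun y hy => ?_
    obtain ⟨hyx, hyU⟩ := mem_erase.1 hy
    simp [hyx, hdisj hyU]
  · intro y t hy hyt
    obtain ⟨hyx, hyU⟩ := mem_erase.1 hy
    have htR : t ∉ R := fun ht => hyx (hR t ht y hyU hyt.symm)
    rcases h.mem_or_mem_of_adj hyU hyt with ht | ht
    · by_cases htx : t = x <;> simp [ht, htx]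
    · simp [ht, htR]

end Exchange

section Separation

variable {V : Type*} [Fintype V] {G : SimpleGraph V} {U W : Finset V}

theorem IsSeparation.compl [DecidableEq V] (h : IsSeparation G U W) :
    IsSeparation G (U ∪ W)ᶜ W := by
  obtain ⟨z, hzU, hzW⟩ := h.exists_notMem
  obtain ⟨u, hu⟩ := h.nonempty
  refine ⟨⟨z, by simp [hzU, hzW]⟩, ?_, ?_, u, by simp [hu], disjoint_left.1 h.disjoint hu⟩
  · exact disjoint_left.2 fun y hy hyW => by simp [hyW] at hy
  · intro y x hy hyx
    simp only [mem_compl, mem_union, not_or] at hy ⊢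
    by_cases hxW : x ∈ W
    · exact .inr hxW
    · exact .inl ⟨fun hxU => (h.mem_or_mem_of_adj hxU hyx.symm).elim hy.1 hy.2, hxW⟩

theorem IsMinSeparation.compl [DecidableEq V] (h : IsMinSeparation G U W) :
    IsMinSeparation G (U ∪ W)ᶜ W :=
  h.of_card_le h.toIsSeparation.compl le_rfl

theorem IsSeparation.card_add_two_le (h : IsSeparation G U W) : #W + 2 ≤ Fintype.card V := by
  classical
  have hcompl := card_compl_add_card (U ∪ W)
  have hpos : 0 < #(U ∪ W)ᶜ := h.compl.nonempty.card_pos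
  rw [card_union_of_disjoint h.disjoint] at hcompl
  have := h.nonempty.card_pos
  omega

variable [DecidableRel G.Adj]

theorem isSeparation_of_card_lt [DecidableEq V] (hne : U.Nonempty) (hdisj : Disjoint U W)
    (hnbr : ∀ u ∈ U, G.neighborFinset u ⊆ U ∪ W) (hcard : #U + #W < Fintype.card V) :
    IsSeparation G U W := by
  refine ⟨hne, hdisj, fun u x hu hux => mem_union.1 (hnbr u hu (by simpa using hux)), ?_⟩
  obtain ⟨z, hz⟩ := exists_mem_notMem_of_card_lt_card (s := U ∪ W) (t := univ)
    (by rw [card_univ]; exact (card_union_le U W).trans_lt hcard)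
  exact ⟨z, by simpa [not_or] using hz.2⟩

theorem isSeparation_singleton_neighborFinset {v : V} (hv : G.degree v + 1 < Fintype.card V) :
    IsSeparation G {v} (G.neighborFinset v) := by
  classical
  exact isSeparation_of_card_lt (singleton_nonempty v) (by simp) (by simp)
    (by rw [card_singleton, G.card_neighborFinset_eq_degree]; omega)

namespace IsMinSeparation

theorem card_le_degree (h : IsMinSeparation G U W) (v : V) : #W ≤ G.degree v := by
  have hcard := h.card_add_two_le
  by_contra! hlt
  have hle := h.card_le (isSeparation_singleton_neighborFinset (v := v) (by omega))
  rw [G.card_neighborFinset_eq_degree] at hle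
  omega

theorem singleton_neighborFinset (h : IsMinSeparation G U W) {v : V} (hv : G.degree v = #W) :
    IsMinSeparation G {v} (G.neighborFinset v) := by
  have hcard := h.card_add_two_le
  exact h.of_card_le (isSeparation_singleton_neighborFinset (by omega))
    (by rw [G.card_neighborFinset_eq_degree, hv])

theorem neighborFinset_inter_nonempty [DecidableEq V] (h : IsMinSeparation G U W) {w : V}
    (hw : w ∈ W) : (G.neighborFinset w ∩ U).Nonempty := by
  by_contra hempty
  have hnadj : ∀ u ∈ U, ¬ G.Adj w u := fun u hu hwu =>
    hempty ⟨u, mem_inter.2 ⟨(G.mem_neighborFinset w u).2 hwu, hu⟩⟩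
  obtain ⟨z, hzU, hzW⟩ := h.exists_notMem
  have hsep : IsSeparation G U (W.erase w) := by
    refine ⟨h.nonempty, h.disjoint.mono_right (erase_subset w W), ?_, z, hzU, by simp [hzW]⟩
    intro u x hu hux
    have hxw : x ≠ w := by
      rintro rfl
      exact hnadj u hu hux.symm
    exact (h.mem_or_mem_of_adj hu hux).imp_right fun hx => mem_erase.2 ⟨hxw, hx⟩
  exact (h.card_le hsep).not_gt (card_erase_lt_of_mem hw)

theorem card_inter_add_card_inter_lt_degree [DecidableEq V] (h : IsMinSeparation G U W) {w : V}
    (hw : w ∈ W) :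
    #(G.neighborFinset w ∩ U) + #(G.neighborFinset w ∩ W) < G.degree w := by
  have hout : 0 < #(G.neighborFinset w ∩ (U ∪ W)ᶜ) :=
    (h.compl.neighborFinset_inter_nonempty hw).card_pos
  have hin : #(G.neighborFinset w ∩ (U ∪ W)) =
      #(G.neighborFinset w ∩ U) + #(G.neighborFinset w ∩ W) := by
    rw [inter_union_distrib_left, card_union_of_disjoint]
    exact h.disjoint.mono inter_subset_right inter_subset_right
  have hsplit := card_inter_add_card_sdiff (G.neighborFinset w) (U ∪ W)
  rw [G.card_neighborFinset_eq_degree, sdiff_eq_inter_compl] at hsplit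
  omega

theorem card_inter_add_card_le_degree [DecidableEq V] (h : IsMinSeparation G U W)
    (hcl : G.IsClique (W : Set V)) {w : V} (hw : w ∈ W) :
    #(G.neighborFinset w ∩ U) + #W ≤ G.degree w := by
  have hsub : W.erase w ⊆ G.neighborFinset w ∩ W := by
    intro x hx
    obtain ⟨hxw, hxW⟩ := mem_erase.1 hx
    simpa [hxW] using hcl hw hxW hxw.symm
  have hcard := card_le_card hsub
  have herase := card_erase_add_one hw
  have hlt := h.card_inter_add_card_inter_lt_degree hw
  omega

-- Exchanging `u` for its only neighbour `x` in `U` gives another minimum cut, so `x` is adjacent to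
-- `u'`; then `x` replaces both `u` and `u'`, which gives a smaller cut.
theorem eq_of_degree_le (h : IsMinSeparation G U W) (hcl : MinCutsAreCliques G) (hU : 1 < #U)
    {u u' : V} (hu : u ∈ W) (hu' : u' ∈ W) (hdeg : G.degree u ≤ #W + 1)
    (hdeg' : G.degree u' ≤ #W + 1) : u = u' := by
  classical
  by_contra hne
  have unique_neighbor {w x : V} (hw : w ∈ W) (hdw : G.degree w ≤ #W + 1) (hx : x ∈ U)
      (hwx : G.Adj w x) : ∀ y ∈ U, G.Adj w y → y = x := by
    intro y hy hwy
    have hle := h.card_inter_add_card_le_degree (hcl h) hw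
    exact card_le_one.1 (by omega : #(G.neighborFinset w ∩ U) ≤ 1) y (by simp [hwy, hy]) x
      (by simp [hwx, hx])
  obtain ⟨x, hx⟩ := h.neighborFinset_inter_nonempty hu
  obtain ⟨hux, hxU⟩ : G.Adj u x ∧ x ∈ U := by simpa using hx
  have huniq := unique_neighbor hu hdeg hxU hux
  have hxu' : G.Adj x u' := by
    have hmin : IsMinSeparation G (U.erase x) (insert x (W \ {u})) := by
      refine h.of_card_le (h.exchange hU hxU (by simpa using huniq)) ?_
      grw [card_insert_le, card_sdiff_of_subset (by simpa using hu), card_singleton]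
      have := card_pos.2 ⟨u, hu⟩
      omega
    refine hcl hmin (by simp) (by simp [hu', Ne.symm hne]) ?_
    rintro rfl
    exact disjoint_left.1 h.disjoint hxU hu'
  have huniq' := unique_neighbor hu' hdeg' hxU hxu'.symm
  have hsep : IsSeparation G (U.erase x) (insert x (W \ {u, u'})) :=
    h.exchange hU hxU (by simpa using ⟨huniq, huniq'⟩)
  have hpair : {u, u'} ⊆ W := by simp [insert_subset_iff, hu, hu']
  have hle := h.card_le hsep
  grw [card_insert_le, card_sdiff_of_subset hpair, card_pair hne] at hle
  have htwo := card_le_card hpair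
  rw [card_pair hne] at htwo
  omega

end IsMinSeparation

end Separation

section Degenerate

variable {V : Type*} {G : SimpleGraph V} {k : ℕ} {W : Finset V}

theorem exists_subset_lt_card_filter_adj_of_not_degenSet [DecidableRel G.Adj]
    (h : ¬ G.DegenSet k (W : Set V)) :
    ∃ T ⊆ W, T.Nonempty ∧ ∀ v ∈ T, k < #{w ∈ T | G.Adj v w} := by
  simp only [SimpleGraph.DegenSet, not_forall, not_exists, not_and, not_le] at h
  obtain ⟨T, hTW, hne, hT⟩ := h
  obtain ⟨T, rfl⟩ := (W.finite_toSet.subset hTW).exists_finset_coe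
  refine ⟨T, coe_subset.1 hTW, coe_nonempty.1 hne, fun v hv => ?_⟩
  rw [← Set.ncard_coe_finset, coe_filter]
  exact hT v hv

theorem filter_adj_subset_erase [DecidableEq V] [DecidableRel G.Adj] (v : V) (T : Finset V) :
    {w ∈ T | G.Adj v w} ⊆ T.erase v := by
  intro x hx
  obtain ⟨hxT, hvx⟩ := mem_filter.1 hx
  exact mem_erase.2 ⟨hvx.ne', hxT⟩

theorem add_two_le_card_of_lt_card_filter_adj [DecidableRel G.Adj] {T : Finset V}
    (hne : T.Nonempty) (hT : ∀ v ∈ T, k < #{w ∈ T | G.Adj v w}) : k + 2 ≤ #T := by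
  classical
  obtain ⟨v, hv⟩ := hne
  have hcard := card_le_card (filter_adj_subset_erase (G := G) v T)
  have herase := card_erase_add_one hv
  have hlt := hT v hv
  omega

theorem add_two_le_card_of_not_degenSet (h : ¬ G.DegenSet k (W : Set V)) : k + 2 ≤ #W := by
  classical
  obtain ⟨T, hTW, hne, hT⟩ := exists_subset_lt_card_filter_adj_of_not_degenSet h
  exact (add_two_le_card_of_lt_card_filter_adj hne hT).trans (card_le_card hTW)

theorem isClique_of_not_degenSet (h : ¬ G.DegenSet k (W : Set V)) (hcard : #W ≤ k + 2) :
    G.IsClique (W : Set V) := by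
  classical
  obtain ⟨T, hTW, hne, hT⟩ := exists_subset_lt_card_filter_adj_of_not_degenSet h
  obtain rfl : T = W := eq_of_subset_of_card_le hTW
    (hcard.trans (add_two_le_card_of_lt_card_filter_adj hne hT))
  intro a ha b hb hab
  have hfilter : ({w ∈ T | G.Adj a w} : Finset V) = T.erase a := by
    refine eq_of_subset_of_card_le (filter_adj_subset_erase a T) ?_
    have := card_erase_add_one (mem_coe.1 ha)
    have := hT a ha
    omega
  have hmem : b ∈ ({w ∈ T | G.Adj a w} : Finset V) := hfilter ▸ mem_erase.2 ⟨hab.symm, hb⟩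
  exact (mem_filter.1 hmem).2

end Degenerate

section Excess

variable {V : Type*} [Fintype V] {G : SimpleGraph V} [DecidableRel G.Adj]

-- Both subtractions are truncated: they give the positive and negative parts of `deg v - d`.
theorem mul_card_add_sum_degree_sub (d : ℕ) :
    d * Fintype.card V + ∑ v, (G.degree v - d) = ∑ v, G.degree v + ∑ v, (d - G.degree v) := by
  have hconst : d * Fintype.card V = ∑ _v : V, d := by simp [mul_comm]
  rw [hconst, ← sum_add_distrib, ← sum_add_distrib]
  exact sum_congr rfl fun v _ => by omega

theorem card_filter_lt_degree_le_sum (d : ℕ) :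
    #{v | d < G.degree v} ≤ ∑ v, (G.degree v - d) := by
  calc #{v | d < G.degree v} = ∑ v with d < G.degree v, 1 := card_eq_sum_ones _
    _ ≤ ∑ v with d < G.degree v, (G.degree v - d) := sum_le_sum fun v hv => by
        have := (mem_filter.1 hv).2
        omega
    _ ≤ ∑ v, (G.degree v - d) := sum_le_sum_of_subset (subset_univ _)

theorem card_filter_lt_degree_lt {d k : ℕ} (hmin : ∀ v, d ≤ G.degree v)
    (hsum : ∑ v, G.degree v < d * Fintype.card V + k) : #{v | d < G.degree v} < k := by
  have hexcess := mul_card_add_sum_degree_sub (G := G) d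
  have hdeficit : ∑ v, (d - G.degree v) = 0 := sum_eq_zero fun v _ => Nat.sub_eq_zero_of_le (hmin v)
  have hle := card_filter_lt_degree_le_sum (G := G) d
  omega

theorem exists_mem_degree_eq {d k : ℕ} (hmin : ∀ v, d ≤ G.degree v)
    (hsum : ∑ v, G.degree v < d * Fintype.card V + k) {A : Finset V} (hA : k ≤ #A) :
    ∃ v ∈ A, G.degree v = d := by
  obtain ⟨v, hvA, hv⟩ :=
    exists_mem_notMem_of_card_lt_card ((card_filter_lt_degree_lt hmin hsum).trans_le hA)
  simp only [mem_filter, mem_univ, true_and, not_lt] at hv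
  exact ⟨v, hvA, hv.antisymm (hmin v)⟩

theorem degree_eq_add_one_of_sum_le {d : ℕ}
    (hsum : ∑ v, (G.degree v - d) ≤ #{v | d < G.degree v}) {b : V} (hb : d < G.degree b) :
    G.degree b = d + 1 := by
  have hone : ∀ v ∈ ({v | d < G.degree v} : Finset V), 1 ≤ G.degree v - d := fun v hv => by
    have := (mem_filter.1 hv).2
    omega
  have hle : ∑ v with d < G.degree v, (G.degree v - d) ≤ ∑ v with d < G.degree v, 1 := by
    rw [← card_eq_sum_ones]
    exact (sum_le_sum_of_subset (subset_univ _)).trans hsum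
  have := (sum_eq_sum_iff_of_le hone).1 ((sum_le_sum hone).antisymm hle) b (by simpa using hb)
  omega

end Excess

section DenseMinCuts

variable {V : Type*} [Fintype V] {G : SimpleGraph V} [DecidableRel G.Adj] {U₀ W₀ : Finset V}

theorem IsMinSeparation.pair [DecidableEq V] (h₀ : IsMinSeparation G U₀ W₀)
    (hn : #W₀ + 2 < Fintype.card V) {u v : V} (hadj : G.Adj u v) (hu : G.degree u = #W₀)
    (hv : G.degree v = #W₀) (hcommon : #W₀ ≤ #(G.neighborFinset u ∩ G.neighborFinset v) + 2) :
    IsMinSeparation G {u, v} ((G.neighborFinset u ∪ G.neighborFinset v) \ {u, v}) := by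
  have hpair : {u, v} ⊆ G.neighborFinset u ∪ G.neighborFinset v := by
    simp [insert_subset_iff, hadj, hadj.symm]
  have hcard : #((G.neighborFinset u ∪ G.neighborFinset v) \ {u, v}) ≤ #W₀ := by
    have hunion := card_union_add_card_inter (G.neighborFinset u) (G.neighborFinset v)
    rw [card_sdiff_of_subset hpair, card_pair hadj.ne]
    simp only [G.card_neighborFinset_eq_degree] at hunion
    omega
  refine h₀.of_card_le (isSeparation_of_card_lt (insert_nonempty u {v}) disjoint_sdiff ?_ ?_) hcard
  · rw [union_sdiff_of_subset hpair]
    simp [subset_union_left, subset_union_right]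
  · rw [card_pair hadj.ne]
    omega

theorem exists_adj_degree_eq_lt_card_inter [DecidableEq V] {d k : ℕ}
    (h₀ : IsMinSeparation G U₀ W₀) (hW₀ : #W₀ = d) (hk : k ≤ Fintype.card V)
    (hsum : ∑ v, G.degree v < d * Fintype.card V + k)
    (hdense : ∀ ⦃U W⦄, IsMinSeparation G U W → ¬ G.DegenSet k (W : Set V)) :
    ∃ u v, G.Adj u v ∧ G.degree u = d ∧ G.degree v = d ∧
      k < #(G.neighborFinset u ∩ G.neighborFinset v) := by
  have hmin : ∀ v, d ≤ G.degree v := fun v => hW₀ ▸ h₀.card_le_degree v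
  obtain ⟨v, -, hv⟩ := exists_mem_degree_eq hmin hsum (A := univ) (by rwa [card_univ])
  obtain ⟨T, hTN, hne, hT⟩ := exists_subset_lt_card_filter_adj_of_not_degenSet
    (hdense (h₀.singleton_neighborFinset (hv.trans hW₀.symm)))
  have hcard := add_two_le_card_of_lt_card_filter_adj hne hT
  obtain ⟨u, huT, hu⟩ := exists_mem_degree_eq hmin hsum (A := T) (by omega)
  have hvu : G.Adj v u := by simpa using hTN huT
  refine ⟨u, v, hvu.symm, hu, hv, (hT u huT).trans_le (card_le_card fun y hy => ?_)⟩
  obtain ⟨hyT, huy⟩ := mem_filter.1 hy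
  exact mem_inter.2 ⟨by simpa using huy, hTN hyT⟩

theorem exists_isMinSeparation_degenSet_of_card_eq_add_three {k : ℕ}
    (h₀ : IsMinSeparation G U₀ W₀) (hW₀ : #W₀ = k + 3) (hn : k + 6 ≤ Fintype.card V)
    (hsum : ∑ v, G.degree v < (k + 3) * Fintype.card V + k) :
    ∃ U W, IsMinSeparation G U W ∧ G.DegenSet k (W : Set V) := by
  classical
  by_contra! hdense
  have hmin : ∀ v, k + 3 ≤ G.degree v := fun v => hW₀ ▸ h₀.card_le_degree v
  obtain ⟨u, v, huv, hu, hv, hcommon⟩ :=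
    exists_adj_degree_eq_lt_card_inter h₀ hW₀ (by omega) hsum hdense
  have hsep := h₀.pair (by omega) huv (hu.trans hW₀.symm) (hv.trans hW₀.symm) (by omega)
  set A := G.neighborFinset u ∩ G.neighborFinset v with hA
  set W := (G.neighborFinset u ∪ G.neighborFinset v) \ {u, v} with hW
  have hWcard : #W ≤ k + 3 := hW₀ ▸ hsep.card_le h₀.toIsSeparation
  obtain ⟨T, hTW, hne, hT⟩ := exists_subset_lt_card_filter_adj_of_not_degenSet (hdense _ _ hsep)
  have hTcard := add_two_le_card_of_lt_card_filter_adj hne hT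
  have hAW : A ⊆ W := by
    intro a ha
    obtain ⟨hua, hva⟩ : G.Adj u a ∧ G.Adj v a := by simpa [hA] using ha
    simp [hW, hua, hua.ne', hva.ne']
  have hATcard : k ≤ #(A ∩ T) := by
    have hunion := card_union_add_card_inter A T
    have hle := card_le_card (union_subset hAW hTW)
    omega
  obtain ⟨a, ha, hdeg⟩ := exists_mem_degree_eq hmin hsum hATcard
  obtain ⟨haA, haT⟩ := mem_inter.1 ha
  obtain ⟨hua, hva⟩ : G.Adj u a ∧ G.Adj v a := by simpa [hA] using haA
  have hpair : 2 ≤ #(G.neighborFinset a ∩ {u, v}) := by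
    rw [inter_eq_right.2 (by simp [insert_subset_iff, hua.symm, hva.symm]), card_pair huv.ne]
  have hdegW : k < #(G.neighborFinset a ∩ W) := (hT a haT).trans_le <| card_le_card fun y hy => by
    obtain ⟨hyT, hay⟩ := mem_filter.1 hy
    exact mem_inter.2 ⟨by simpa using hay, hTW hyT⟩
  have hlt := hsep.card_inter_add_card_inter_lt_degree (hTW haT)
  omega

end DenseMinCuts

section CliqueMinCuts

variable {V : Type*} [Fintype V] {G : SimpleGraph V} [DecidableRel G.Adj]

theorem mem_neighborsOfDegree {b y : V} {d : ℕ} :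
    y ∈ neighborsOfDegree G b d ↔ G.Adj b y ∧ G.degree y = d := by
  simp [neighborsOfDegree]

theorem neighborsOfDegree_subset (b : V) (d : ℕ) :
    neighborsOfDegree G b d ⊆ G.neighborFinset b :=
  filter_subset _ _

theorem neighborFinset_subset_of_degree_le [DecidableEq V] (hcl : MinCutsAreCliques G)
    {v₁ v₂ b : V} (hne : v₁ ≠ v₂) (h₁ : IsMinSeparation G {v₁} (G.neighborFinset v₁))
    (h₂ : IsMinSeparation G {v₂} (G.neighborFinset v₂)) (hnadj : ¬ G.Adj v₁ v₂)
    (hb₁ : b ∈ G.neighborFinset v₁) (hb₂ : b ∈ G.neighborFinset v₂)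
    (hdeg : G.degree b ≤ #(G.neighborFinset v₁ ∪ G.neighborFinset v₂) + 1) :
    G.neighborFinset b ⊆ {v₁, v₂} ∪ (G.neighborFinset v₁ ∪ G.neighborFinset v₂) := by
  set N := G.neighborFinset v₁ ∪ G.neighborFinset v₂ with hN
  have hbN : b ∈ N := mem_union_left _ hb₁
  have hdisj : Disjoint {v₁, v₂} N := by simp [hN, hnadj, mt SimpleGraph.Adj.symm hnadj]
  have hsub : {v₁, v₂} ∪ N.erase b ⊆ G.neighborFinset b := by
    intro y hy
    simp only [hN, mem_union, mem_insert, mem_singleton, mem_erase] at hy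
    rw [G.mem_neighborFinset]
    rcases hy with (rfl | rfl) | ⟨hyb, hy | hy⟩
    · simpa [G.adj_comm] using hb₁
    · simpa [G.adj_comm] using hb₂
    · exact hcl h₁ hb₁ hy hyb.symm
    · exact hcl h₂ hb₂ hy hyb.symm
  have hcard : #({v₁, v₂} ∪ N.erase b) = #N + 1 := by
    rw [card_union_of_disjoint (hdisj.mono_right (erase_subset b N)), card_pair hne]
    have := card_erase_add_one hbN
    omega
  have heq := eq_of_subset_of_card_le hsub (by rw [G.card_neighborFinset_eq_degree]; omega)
  exact heq ▸ union_subset_union_right (erase_subset b N)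

namespace IsMinSeparation

section LowVertex

variable {v : V} (hv : IsMinSeparation G {v} (G.neighborFinset v)) (hcl : MinCutsAreCliques G)
include hv hcl

theorem degree_lt_degree_of_adj {u : V} (hvu : G.Adj v u) : G.degree v < G.degree u := by
  classical
  have hu : u ∈ G.neighborFinset v := by simpa using hvu
  have hle := hv.card_inter_add_card_le_degree (hcl hv) hu
  have hpos := (hv.neighborFinset_inter_nonempty hu).card_pos
  rw [G.card_neighborFinset_eq_degree] at hle
  omega

theorem degree_le_card_filter_high_add_one (hn : G.degree v + 3 ≤ Fintype.card V) :
    G.degree v ≤ #{u ∈ G.neighborFinset v | G.degree v + 1 < G.degree u} + 1 := by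
  classical
  have hside : 1 < #({v} ∪ G.neighborFinset v)ᶜ := by
    have hcompl := card_compl_add_card ({v} ∪ G.neighborFinset v)
    rw [card_union_of_disjoint hv.disjoint, card_singleton,
      G.card_neighborFinset_eq_degree] at hcompl
    omega
  have hfew : #{u ∈ G.neighborFinset v | ¬ G.degree v + 1 < G.degree u} ≤ 1 := by
    refine card_le_one.2 fun u hu u' hu' => ?_
    rw [mem_filter, not_lt] at hu hu'
    refine hv.compl.eq_of_degree_le hcl hside hu.1 hu'.1 ?_ ?_
    · simpa using hu.2
    · simpa using hu'.2
  have hsplit := card_filter_add_card_filter_not (s := G.neighborFinset v)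
    (fun u => G.degree v + 1 < G.degree u)
  rw [G.card_neighborFinset_eq_degree] at hsplit
  omega

theorem disjoint_neighborsOfDegree_neighborFinset (b : V) :
    Disjoint (neighborsOfDegree G b (G.degree v)) (G.neighborFinset v) := by
  refine disjoint_left.2 fun y hy hvy => ?_
  have hlt := hv.degree_lt_degree_of_adj hcl (by simpa using hvy)
  exact hlt.ne' (mem_neighborsOfDegree.1 hy).2

theorem neighborsOfDegree_union_erase_subset [DecidableEq V] {b : V} (hvb : G.Adj v b) :
    neighborsOfDegree G b (G.degree v) ∪ (G.neighborFinset v).erase b ⊆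
      G.neighborFinset b := by
  refine union_subset (neighborsOfDegree_subset b _) fun y hy => ?_
  obtain ⟨hyb, hvy⟩ := mem_erase.1 hy
  simpa using hcl hv (by simpa using hvb) (by simpa using hvy) hyb.symm

theorem card_neighborsOfDegree_union_erase [DecidableEq V] {b : V} (hvb : G.Adj v b) :
    #(neighborsOfDegree G b (G.degree v) ∪ (G.neighborFinset v).erase b) + 1 =
      #(neighborsOfDegree G b (G.degree v)) + G.degree v := by
  have hb : b ∈ G.neighborFinset v := by simpa using hvb
  rw [card_union_of_disjoint
    ((hv.disjoint_neighborsOfDegree_neighborFinset hcl b).mono_right (erase_subset _ _)), add_assoc,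
    card_erase_add_one hb, G.card_neighborFinset_eq_degree]

theorem card_neighborsOfDegree_add_degree_le_add_one {b : V} (hvb : G.Adj v b) :
    #(neighborsOfDegree G b (G.degree v)) + G.degree v ≤ G.degree b + 1 := by
  classical
  have hle := card_le_card (hv.neighborsOfDegree_union_erase_subset hcl hvb)
  have heq := hv.card_neighborsOfDegree_union_erase hcl hvb
  rw [G.card_neighborFinset_eq_degree] at hle
  omega

-- If the bound failed, all low neighbours of `b` would have the neighbourhood `N(v)`, so they would
-- form one side of the minimum cut `N(v)`, with no neighbour of `b` left for the other side.
theorem card_neighborsOfDegree_add_degree_le {b : V} (hvb : G.Adj v b)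
    (hn : #(neighborsOfDegree G b (G.degree v)) + G.degree v < Fintype.card V) :
    #(neighborsOfDegree G b (G.degree v)) + G.degree v ≤ G.degree b := by
  classical
  by_contra! hlt
  have hLb := neighborsOfDegree_subset (G := G) b (G.degree v)
  have hsub := hv.neighborsOfDegree_union_erase_subset hcl hvb
  have hcard := hv.card_neighborsOfDegree_union_erase hcl hvb
  set L := neighborsOfDegree G b (G.degree v)
  have hNb : L ∪ (G.neighborFinset v).erase b = G.neighborFinset b := by
    refine eq_of_subset_of_card_le hsub ?_
    rw [G.card_neighborFinset_eq_degree]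
    omega
  have hNL : ∀ y ∈ L, G.neighborFinset y ⊆ G.neighborFinset v := by
    intro y hy x hx
    obtain ⟨hby, hdy⟩ := mem_neighborsOfDegree.1 hy
    have hysep := hv.singleton_neighborFinset (v := y) (by rwa [G.card_neighborFinset_eq_degree])
    have hyx : G.Adj y x := by simpa using hx
    obtain rfl | hxb := eq_or_ne x b
    · simpa using hvb
    · have hbx : G.Adj b x := hcl hysep (by simpa using hby.symm) hx hxb.symm
      have hxL : x ∉ L := fun hxL =>
        (hysep.degree_lt_degree_of_adj hcl hyx).ne (hdy.trans (mem_neighborsOfDegree.1 hxL).2.symm)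
      have hxmem : x ∈ L ∪ (G.neighborFinset v).erase b := hNb ▸ by simpa using hbx
      exact mem_of_mem_erase ((mem_union.1 hxmem).resolve_left hxL)
  have hsep : IsMinSeparation G L (G.neighborFinset v) :=
    hv.of_card_le (isSeparation_of_card_lt ⟨v, mem_neighborsOfDegree.2 ⟨hvb.symm, rfl⟩⟩
      (hv.disjoint_neighborsOfDegree_neighborFinset hcl b)
      (fun y hy => (hNL y hy).trans subset_union_right)
      (by rwa [G.card_neighborFinset_eq_degree])) le_rfl
  have hle := hsep.card_inter_add_card_le_degree (hcl hsep) (by simpa using hvb)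
  rw [inter_eq_right.2 hLb, G.card_neighborFinset_eq_degree] at hle
  omega

end LowVertex

variable {U₀ W₀ : Finset V} {c : ℕ} (h₀ : IsMinSeparation G U₀ W₀) (hW₀ : #W₀ = c)
  (hcl : MinCutsAreCliques G)
include h₀ hW₀

theorem mul_card_add_sum_degree_sub_eq_add_card_low :
    (c + 1) * Fintype.card V + ∑ v, (G.degree v - (c + 1)) =
      ∑ v, G.degree v + #{v | G.degree v = c} := by
  rw [mul_card_add_sum_degree_sub, card_filter]
  congr 1
  refine sum_congr rfl fun v _ => ?_
  have := h₀.card_le_degree v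
  split_ifs <;> omega

include hcl

theorem card_neighborsOfDegree_le_two_mul (hn : c + 4 ≤ Fintype.card V) {b : V}
    (hb : c + 1 < G.degree b) :
    #(neighborsOfDegree G b c) ≤ 2 * (G.degree b - (c + 1)) := by
  obtain hempty | ⟨v, hv⟩ := (neighborsOfDegree G b c).eq_empty_or_nonempty
  · simp [hempty]
  obtain ⟨hbv, rfl⟩ := mem_neighborsOfDegree.1 hv
  have hsep := h₀.singleton_neighborFinset hW₀.symm
  have hweak := hsep.card_neighborsOfDegree_add_degree_le_add_one hcl hbv.symm
  have hstrong := hsep.card_neighborsOfDegree_add_degree_le hcl hbv.symm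
  omega

theorem mul_card_low_le_two_mul_sum (hn : c + 4 ≤ Fintype.card V) :
    (c - 1) * #{v | G.degree v = c} ≤ 2 * ∑ v, (G.degree v - (c + 1)) := by
  classical
  set L : Finset V := {v | G.degree v = c} with hL
  set B : Finset V := {v | c + 1 < G.degree v} with hB
  calc (c - 1) * #L = ∑ v ∈ L, (c - 1) := by rw [sum_const, smul_eq_mul, mul_comm]
    _ ≤ ∑ v ∈ L, #(B.bipartiteAbove G.Adj v) := sum_le_sum fun v hv => by
        obtain rfl : G.degree v = c := by simpa [hL] using hv
        have hle := degree_le_card_filter_high_add_one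
          (h₀.singleton_neighborFinset hW₀.symm) hcl (by omega)
        have hfilter : B.bipartiteAbove G.Adj v =
            {u ∈ G.neighborFinset v | G.degree v + 1 < G.degree u} := by
          ext u
          simp [hB, bipartiteAbove, and_comm]
        rw [hfilter]
        omega
    _ = ∑ b ∈ B, #(L.bipartiteBelow G.Adj b) :=
        sum_card_bipartiteAbove_eq_sum_card_bipartiteBelow _
    _ ≤ ∑ b ∈ B, 2 * (G.degree b - (c + 1)) := sum_le_sum fun b hb => by
        have hfilter : L.bipartiteBelow G.Adj b = neighborsOfDegree G b c := by
          ext v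
          simp [hL, bipartiteBelow, mem_neighborsOfDegree, and_comm, G.adj_comm]
        rw [hfilter]
        exact h₀.card_neighborsOfDegree_le_two_mul hW₀ hcl hn (by simpa [hB] using hb)
    _ ≤ ∑ v, 2 * (G.degree v - (c + 1)) := sum_le_sum_of_subset (subset_univ _)
    _ = 2 * ∑ v, (G.degree v - (c + 1)) := (mul_sum _ _ _).symm

theorem exists_degree_eq_of_sum_degree_le
    (hsum : ∑ v, G.degree v + 3 ≤ (c + 1) * Fintype.card V + c) : ∃ v, G.degree v = c := by
  classical
  by_contra! hlow
  have hmin : ∀ v, c + 1 ≤ G.degree v := fun v =>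
    (hW₀ ▸ h₀.card_le_degree v).lt_of_ne (hlow v).symm
  have hU₀ : 1 < #U₀ := by
    by_contra! hle
    obtain ⟨x, rfl⟩ := card_eq_one.1 (hle.antisymm h₀.nonempty.card_pos)
    have hsub : G.neighborFinset x ⊆ W₀ := fun y hy => by
      have hxy : G.Adj x y := by simpa using hy
      exact (h₀.mem_or_mem_of_adj (mem_singleton_self x) hxy).resolve_left (by simpa using hxy.ne')
    have hcard := card_le_card hsub
    rw [G.card_neighborFinset_eq_degree] at hcard
    have := hmin x
    omega
  obtain ⟨u, hu, hdu⟩ := exists_mem_degree_eq (k := c - 2) hmin (by omega) (A := W₀) (by omega)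
  obtain ⟨u', hu', hdu'⟩ := exists_mem_degree_eq (k := c - 2) hmin (by omega) (A := W₀.erase u)
    (by rw [card_erase_of_mem hu]; omega)
  exact ne_of_mem_erase hu' (h₀.eq_of_degree_le hcl hU₀ hu (mem_of_mem_erase hu')
    (by omega) (by omega)).symm

theorem neighborFinset_ne_of_card_high_lt (hn : c + 3 ≤ Fintype.card V) {v₁ v₂ : V}
    (hne : v₁ ≠ v₂) (hv₁ : G.degree v₁ = c) (hB : #{v | c + 1 < G.degree v} < c) :
    G.neighborFinset v₁ ≠ G.neighborFinset v₂ := by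
  classical
  intro hN
  have hcard : #(G.neighborFinset v₁) = c := by rw [G.card_neighborFinset_eq_degree, hv₁]
  have hv₂ : v₂ ∉ G.neighborFinset v₁ := by simp [hN]
  have hsep : IsMinSeparation G {v₁, v₂} (G.neighborFinset v₁) := by
    refine h₀.of_card_le (isSeparation_of_card_lt (by simp) ?_ ?_ ?_) (by omega)
    · simpa using hv₂
    · simpa [← hN] using subset_union_right (s₁ := {v₁, v₂})
    · rw [card_pair hne]
      omega
  have hsub : G.neighborFinset v₁ ⊆ ({v | c + 1 < G.degree v} : Finset V) := by
    intro u hu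
    have hle := hsep.card_inter_add_card_le_degree (hcl hsep) hu
    have hu₁ : G.Adj v₁ u := by simpa using hu
    have hu₂ : G.Adj v₂ u := by
      rw [hN] at hu
      simpa using hu
    rw [inter_eq_right.2 (by simp [insert_subset_iff, hu₁.symm, hu₂.symm]), card_pair hne,
      hcard] at hle
    simp only [mem_filter, mem_univ, true_and]
    omega
  have hle := card_le_card hsub
  omega

theorem card_le_two_of_high_subset (hn : c + 4 ≤ Fintype.card V) {v₁ v₂ : V} {B : Finset V}
    (hv₁ : G.degree v₁ = c) (hv₂ : G.degree v₂ = c)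
    (hN : G.neighborFinset v₁ ≠ G.neighborFinset v₂) (hB₁ : B ⊆ G.neighborFinset v₁)
    (hB₂ : B ⊆ G.neighborFinset v₂) (hB : #B + 1 = c) (hdeg : ∀ b ∈ B, G.degree b = c + 2) :
    c ≤ 2 := by
  classical
  have hne : v₁ ≠ v₂ := fun h => hN (h ▸ rfl)
  have h₁ := h₀.singleton_neighborFinset (hv₁.trans hW₀.symm)
  have h₂ := h₀.singleton_neighborFinset (hv₂.trans hW₀.symm)
  have hnadj : ¬ G.Adj v₁ v₂ := fun hadj =>
    (h₁.degree_lt_degree_of_adj hcl hadj).ne (hv₁.trans hv₂.symm)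
  have hinter : #(G.neighborFinset v₁ ∩ G.neighborFinset v₂) < c := by
    by_contra! hle
    refine hN ((eq_of_subset_of_card_le inter_subset_left ?_).symm.trans
      (eq_of_subset_of_card_le inter_subset_right ?_))
    · rwa [G.card_neighborFinset_eq_degree, hv₁]
    · rwa [G.card_neighborFinset_eq_degree, hv₂]
  have hBinter := card_le_card (subset_inter hB₁ hB₂)
  have hunion := card_union_add_card_inter (G.neighborFinset v₁) (G.neighborFinset v₂)
  rw [G.card_neighborFinset_eq_degree, G.card_neighborFinset_eq_degree, hv₁, hv₂] at hunion
  have hBsub : B ⊆ G.neighborFinset v₁ ∪ G.neighborFinset v₂ := hB₁.trans subset_union_left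
  have hNb : ∀ b ∈ B, G.neighborFinset b ⊆ _ := fun b hb =>
    neighborFinset_subset_of_degree_le hcl hne h₁ h₂ hnadj (hB₁ hb) (hB₂ hb)
      (by rw [hdeg b hb]; omega)
  have hdisj : Disjoint {v₁, v₂} (G.neighborFinset v₁ ∪ G.neighborFinset v₂) := by
    simp [hnadj, mt SimpleGraph.Adj.symm hnadj]
  set N := G.neighborFinset v₁ ∪ G.neighborFinset v₂
  have hcard : #(N \ B) ≤ 2 := by
    rw [card_sdiff_of_subset hBsub]
    omega
  have hsep : IsSeparation G ({v₁, v₂} ∪ B) (N \ B) := by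
    refine isSeparation_of_card_lt (by simp) ?_ ?_ ?_
    · exact disjoint_union_left.2 ⟨hdisj.mono_right sdiff_subset, disjoint_sdiff⟩
    · rw [union_assoc, union_sdiff_of_subset hBsub]
      intro u hu
      simp only [mem_union, mem_insert, mem_singleton] at hu
      rcases hu with (rfl | rfl) | hu
      · exact subset_union_left.trans subset_union_right
      · exact subset_union_right.trans subset_union_right
      · exact hNb u hu
    · grw [card_union_le, card_le_two, hcard]
      omega
  exact hW₀ ▸ (h₀.card_le hsep).trans hcard

theorem filter_high_subset_neighborFinset (hn : c + 3 ≤ Fintype.card V)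
    (hB : #{v | c + 1 < G.degree v} + 1 ≤ c) {v : V} (hv : G.degree v = c) :
    ({v | c + 1 < G.degree v} : Finset V) ⊆ G.neighborFinset v := by
  subst hv
  have hle := degree_le_card_filter_high_add_one (h₀.singleton_neighborFinset hW₀.symm) hcl hn
  have heq := eq_of_subset_of_card_le
    (filter_subset_filter (fun u => G.degree v + 1 < G.degree u)
      (subset_univ (G.neighborFinset v))) (by omega)
  exact heq ▸ filter_subset _ _

theorem lt_sum_degree_of_minCutsAreCliques (hc : 4 ≤ c) (hn : c + 4 ≤ Fintype.card V) :
    (c + 1) * Fintype.card V + c < ∑ v, G.degree v + 3 := by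
  by_contra! hsum
  obtain ⟨v₁, hv₁⟩ := h₀.exists_degree_eq_of_sum_degree_le hW₀ hcl hsum
  have hexcess := h₀.mul_card_add_sum_degree_sub_eq_add_card_low hW₀
  have hhigh := card_filter_lt_degree_le_sum (G := G) (c + 1)
  have hlow : #{v | G.degree v = c} ≤ 2 := by
    have hcount := h₀.mul_card_low_le_two_mul_sum hW₀ hcl hn
    obtain ⟨i, rfl⟩ := Nat.exists_eq_add_of_le hc
    have hE : ∑ v, (G.degree v - (4 + i + 1)) ≤ #{v | G.degree v = 4 + i} + (i + 1) := by omega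
    rw [show 4 + i - 1 = i + 3 by omega] at hcount
    refine Nat.le_of_mul_le_mul_left (c := i + 1) ?_ i.succ_pos
    linarith
  have hv₁high : c ≤ #{v | c + 1 < G.degree v} + 1 := by
    subst hv₁
    exact (degree_le_card_filter_high_add_one (h₀.singleton_neighborFinset hW₀.symm) hcl
      (by omega)).trans (by gcongr; exact subset_univ _)
  obtain ⟨v₂, hv₂, hne⟩ := exists_mem_ne (s := {v | G.degree v = c}) (by omega) v₁
  have hv₂ : G.degree v₂ = c := by simpa using hv₂
  have hN := h₀.neighborFinset_ne_of_card_high_lt hW₀ hcl (by omega) hne.symm hv₁ (by omega)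
  have hsub {v : V} := filter_high_subset_neighborFinset (v := v) h₀ hW₀ hcl (by omega) (by omega)
  have := h₀.card_le_two_of_high_subset hW₀ hcl hn hv₁ hv₂ hN (hsub hv₁) (hsub hv₂) (by omega)
    fun b hb => degree_eq_add_one_of_sum_le (by omega) (mem_filter.1 hb).2
  omega

end IsMinSeparation

end CliqueMinCuts

section Main

variable {V : Type*} [Fintype V] {G : SimpleGraph V} [DecidableRel G.Adj] {k : ℕ}

theorem exists_isMinSeparation_of_sum_degree_lt
    (hsum : ∑ v, G.degree v < Fintype.card V * (Fintype.card V - 1)) :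
    ∃ U W, IsMinSeparation G U W := by
  obtain ⟨v, -, hv⟩ : ∃ v ∈ univ, G.degree v < Fintype.card V - 1 :=
    exists_lt_of_sum_lt (by simpa using hsum)
  exact (isSeparation_singleton_neighborFinset (v := v) (by omega)).exists_isMinSeparation

theorem exists_isMinSeparation_degenSet (hk : 2 ≤ k) (hn : k + 6 ≤ Fintype.card V)
    (hsum : ∑ v, G.degree v < (k + 3) * Fintype.card V + k) :
    ∃ U W, IsMinSeparation G U W ∧ G.DegenSet k (W : Set V) := by
  have hsum' : ∑ v, G.degree v < (k + 4) * Fintype.card V := by linarith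
  obtain ⟨U₀, W₀, h₀⟩ := exists_isMinSeparation_of_sum_degree_lt (G := G) <|
    hsum'.trans_le (by rw [mul_comm]; gcongr; omega)
  by_contra! hdense
  have hlower : k + 2 ≤ #W₀ := add_two_le_card_of_not_degenSet (hdense U₀ W₀ h₀)
  have hupper : #W₀ < k + 4 := by
    refine lt_of_mul_lt_mul_right (hsum'.trans_le' ?_) (Fintype.card V).zero_le
    simpa [mul_comm] using card_nsmul_le_sum univ _ _ fun v _ => h₀.card_le_degree v
  obtain hW₀ | hW₀ : #W₀ = k + 3 ∨ #W₀ = k + 2 := by omega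
  · obtain ⟨U, W, h, hdegen⟩ :=
      exists_isMinSeparation_degenSet_of_card_eq_add_three h₀ hW₀ hn hsum
    exact hdense U W h hdegen
  · have hcl : MinCutsAreCliques G := fun U W h =>
      isClique_of_not_degenSet (hdense U W h) (hW₀ ▸ h.card_le h₀.toIsSeparation)
    have := h₀.lt_sum_degree_of_minCutsAreCliques hW₀ hcl (by omega) (by omega)
    linarith

end Main

theorem stmt2 {V : Type*} [Fintype V] (G : SimpleGraph V) [DecidableRel G.Adj]
    (k : ℕ) (hk : 2 ≤ k) (hconn : G.Connected) (hn : k + 6 ≤ Fintype.card V)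
    (hm : (G.edgeFinset.card : ℝ)
        ≤ ((k : ℝ) + 3) / 2 * (Fintype.card V : ℝ) + ((k : ℝ) - 1) / 2) :
    ∃ S : Set V, G.IsCutset S ∧ (∀ T : Set V, G.IsCutset T → S.ncard ≤ T.ncard) ∧
      G.DegenSet k S := by
  have hsum : ∑ v, G.degree v < (k + 3) * Fintype.card V + k := by
    rw [G.sum_degrees_eq_twice_card_edges]
    have : (2 * #G.edgeFinset : ℝ) < (k + 3) * Fintype.card V + k := by linarith
    exact_mod_cast this
  obtain ⟨U, W, hmin, hdegen⟩ := exists_isMinSeparation_degenSet hk hn hsum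
  refine ⟨W, hmin.isCutset, fun T hT => ?_, hdegen⟩
  rw [Set.ncard_coe_finset]
  exact hmin.card_le_ncard_of_isCutset hT
end

section
/- Let G be a finite simple graph of order at least 18 with vertex connectivity at least 5 that has no 2-degenerate cut. If u is a vertex of G of degree exactly 5, then the sum of the degrees in G of the neighbors of u is at least 29. -/
/-!
Write `N` for the neighbourhood of `u` and `R` for the set of vertices at distance two from `u`.
For `X ⊆ N` with few neighbours in `R`, the set `(N \ X) ∪ N_R(X)` separates `{u} ∪ X` from the
rest, so `X` has at least `|X|` neighbours in `R` and this cut contains a subgraph of minimum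
degree at least three (a *core*).

If the degree sum is at most 28, then `2 e(N) + e(N, R) ≤ 23`. The choice `X = ∅` puts a core
inside `N`, so either `e(N) ≥ 8`, or `N` is a `K₄` together with a vertex `w` having at most one
neighbour in it. In the first case at least three vertices of `N` have a single neighbour in `R`,
and exchanging any one of them shows that the other four are pairwise adjacent; hence `N` is a
`K₅`, which leaves too few edges to `R`. In the second case, exchanging a vertex `x` of the `K₄`
with its only neighbour `a` in `R` shows that `a` is adjacent to the whole `K₄`. Then every other
vertex of `R` has at most one neighbour in the `K₄`, and exchanging `x` together with a suitable
second vertex `y` yields a cut without a core.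
-/

open Finset

section Nbrs

variable {V : Type*} {G : SimpleGraph V} [DecidableRel G.Adj]
  {A B X P K : Finset V} {v w p : V}

/-- The set of neighbours of the vertex `v` that lie in `A`. -/
def nbrsIn (G : SimpleGraph V) [DecidableRel G.Adj] (A : Finset V) (v : V) : Finset V :=
  {w ∈ A | G.Adj v w}

/-- The set `N_A(X)` of the vertices of `A` that have a neighbour in `X`. -/
def nbrSetIn [DecidableEq V] (G : SimpleGraph V) [DecidableRel G.Adj] (A X : Finset V) :
    Finset V :=
  X.biUnion (nbrsIn G A)

@[simp]
lemma mem_nbrsIn : w ∈ nbrsIn G A v ↔ w ∈ A ∧ G.Adj v w := mem_filter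

lemma nbrsIn_mono (h : A ⊆ B) (v : V) : nbrsIn G A v ⊆ nbrsIn G B v :=
  filter_subset_filter _ h

lemma nbrsIn_eq_self_iff : nbrsIn G A v = A ↔ ∀ w ∈ A, G.Adj v w := filter_eq_self

lemma sum_card_nbrsIn_comm (A X : Finset V) :
    ∑ x ∈ X, #(nbrsIn G A x) = ∑ p ∈ A, #(nbrsIn G X p) := by
  simpa only [nbrsIn, bipartiteAbove, bipartiteBelow, G.adj_comm] using
    sum_card_bipartiteAbove_eq_sum_card_bipartiteBelow (s := X) (t := A) G.Adj

section DecidableEq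

variable [DecidableEq V]

@[simp]
lemma mem_nbrSetIn : p ∈ nbrSetIn G A X ↔ p ∈ A ∧ ∃ x ∈ X, G.Adj x p := by
  simp only [nbrSetIn, mem_biUnion, mem_nbrsIn]
  tauto

@[simp]
lemma nbrSetIn_singleton (A : Finset V) (x : V) : nbrSetIn G A {x} = nbrsIn G A x :=
  singleton_biUnion

lemma nbrsIn_subset_erase (A : Finset V) (v : V) : nbrsIn G A v ⊆ A.erase v := by
  intro w hw
  rw [mem_nbrsIn] at hw
  exact mem_erase.2 ⟨hw.2.ne', hw.1⟩

lemma nbrsIn_insert_self (A : Finset V) (v : V) : nbrsIn G (insert v A) v = nbrsIn G A v := by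
  simp [nbrsIn, filter_insert]

lemma card_nbrSetIn_le (A X : Finset V) : #(nbrSetIn G A X) ≤ ∑ x ∈ X, #(nbrsIn G A x) :=
  card_biUnion_le

-- Count the edges between `A` and `X` from the side of `A`: vertices of `P` contribute all of their
-- edges, every other vertex of `N_A(X)` at least one.
lemma card_nbrSetIn_add_sum_le (hP : P ⊆ A) :
    #(nbrSetIn G A X) + ∑ p ∈ P, #(nbrsIn G X p) ≤ #P + ∑ x ∈ X, #(nbrsIn G A x) := by
  have hsplit : nbrSetIn G A X ⊆ P ∪ nbrSetIn G (A \ P) X := by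
    intro p hp
    simp only [mem_nbrSetIn, mem_union, mem_sdiff] at hp ⊢
    tauto
  have hcard := (card_le_card hsplit).trans (card_union_le _ _)
  have hrest := card_nbrSetIn_le (G := G) (A \ P) X
  rw [sum_card_nbrsIn_comm] at hrest
  rw [sum_card_nbrsIn_comm A, ← sum_sdiff hP]
  omega

lemma card_nbrSetIn_add_card_nbrsIn_le {a : V} (ha : a ∈ A) :
    #(nbrSetIn G A X) + #(nbrsIn G X a) ≤ 1 + ∑ x ∈ X, #(nbrsIn G A x) := by
  simpa using card_nbrSetIn_add_sum_le (G := G) (X := X) (singleton_subset_iff.2 ha)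

lemma sum_card_nbrsIn_insert (hw : w ∉ K) :
    ∑ v ∈ insert w K, #(nbrsIn G (insert w K) v)
      = ∑ v ∈ K, #(nbrsIn G K v) + 2 * #(nbrsIn G K w) := by
  have hK : ∑ v ∈ K, #(nbrsIn G (insert w K) v)
      = ∑ v ∈ insert w K, #(nbrsIn G K v) := by
    rw [sum_card_nbrsIn_comm]
  rw [sum_insert hw, hK, sum_insert hw, nbrsIn_insert_self]
  ring

end DecidableEq

lemma even_sum_card_nbrsIn (K : Finset V) : Even (∑ v ∈ K, #(nbrsIn G K v)) := by
  classical
  induction K using Finset.induction_on with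
  | empty => simp
  | insert w K hw ih =>
    rw [sum_card_nbrsIn_insert hw]
    exact ih.add (even_two_mul _)

lemma sum_card_nbrsIn_of_isClique (hK : G.IsClique K) :
    ∑ v ∈ K, #(nbrsIn G K v) = #K * (#K - 1) := by
  classical
  refine sum_const_nat fun v hv ↦ ?_
  have hnbrs : nbrsIn G K v = K.erase v := by
    refine (nbrsIn_subset_erase K v).antisymm fun w hw ↦ ?_
    rw [mem_erase] at hw
    exact mem_nbrsIn.2 ⟨hw.2, hK hv hw.2 hw.1.symm⟩
  rw [hnbrs, card_erase_of_mem hv]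

end Nbrs

lemma two_mul_card_le_sum_add_card_filter_eq_one {ι : Type*} {s : Finset ι} {f : ι → ℕ}
    (hf : ∀ i ∈ s, 1 ≤ f i) : 2 * #s ≤ ∑ i ∈ s, f i + #{i ∈ s | f i = 1} := by
  rw [card_filter, ← sum_add_distrib, mul_comm, ← smul_eq_mul]
  refine card_nsmul_le_sum _ _ _ fun i hi ↦ ?_
  have := hf i hi
  split_ifs <;> omega

lemma isClique_of_forall_isClique_diff_singleton {V : Type*} {G : SimpleGraph V} {S : Set V}
    {Q : Finset V} (hQ : 2 < #Q) (h : ∀ v ∈ Q, G.IsClique (S \ {v})) : G.IsClique S := by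
  classical
  intro p hp q hq hpq
  obtain ⟨v, hvQ, hv⟩ := exists_mem_notMem_of_card_lt_card (card_le_two.trans_lt hQ : #{p, q} < #Q)
  simp only [mem_insert, mem_singleton, not_or] at hv
  exact h v hvQ ⟨hp, Ne.symm hv.1⟩ ⟨hq, Ne.symm hv.2⟩ hpq

section Core

variable {V : Type*} {G : SimpleGraph V} [DecidableRel G.Adj] {k : ℕ}
  {T N S : Finset V}

/-- `T` induces a non-empty subgraph of minimum degree at least `k`. Such sets are the obstructions
to being `(k - 1)`-degenerate. -/
structure IsCore_s5 (G : SimpleGraph V) [DecidableRel G.Adj] (k : ℕ) (T : Finset V) : Prop where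
  nonempty : T.Nonempty
  le_card_nbrsIn : ∀ v ∈ T, k ≤ #(nbrsIn G T v)

lemma exists_isCore_of_not_degenSet_s5 (h : ¬ G.DegenSet k S) :
    ∃ T ⊆ S, IsCore_s5 G (k + 1) T := by
  simp only [SimpleGraph.DegenSet, not_forall, not_exists, not_and, not_le] at h
  obtain ⟨T, hTS, hT, hdeg⟩ := h
  lift T to Finset V using S.finite_toSet.subset hTS
  refine ⟨T, coe_subset.1 hTS, coe_nonempty.1 hT, fun v hv ↦ ?_⟩
  have hnbrs : {w ∈ (T : Set V) | G.Adj v w} = nbrsIn G T v := by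
    ext w
    simp
  simpa only [hnbrs, Set.ncard_coe_finset, Nat.lt_iff_add_one_le] using hdeg v hv

namespace IsCore_s5

lemma mul_card_le_sum (hT : IsCore_s5 G k T) : k * #T ≤ ∑ v ∈ T, #(nbrsIn G T v) := by
  rw [mul_comm, ← smul_eq_mul]
  exact card_nsmul_le_sum _ _ _ hT.le_card_nbrsIn

lemma lt_card_s5 (hT : IsCore_s5 G k T) : k < #T := by
  classical
  obtain ⟨v, hv⟩ := hT.nonempty
  have hle := (hT.le_card_nbrsIn v hv).trans (card_le_card (nbrsIn_subset_erase T v))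
  exact hle.trans_lt (card_erase_lt_of_mem hv)

lemma isClique (hT : IsCore_s5 G k T) (hcard : #T ≤ k + 1) : G.IsClique T := by
  classical
  intro p hp q hq hpq
  have hnbrs : nbrsIn G T p = T.erase p := by
    refine eq_of_subset_of_card_le (nbrsIn_subset_erase T p) ?_
    rw [card_erase_of_mem hp]
    exact (Nat.sub_le_of_le_add hcard).trans (hT.le_card_nbrsIn p hp)
  exact (mem_nbrsIn.1 (hnbrs ▸ mem_erase.2 ⟨hpq.symm, hq⟩ : q ∈ nbrsIn G T p)).2

lemma eq_of_subset (hT : IsCore_s5 G k T) (hTS : T ⊆ S) (hS : #S ≤ k + 1) : T = S :=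
  eq_of_subset_of_card_le hTS (hS.trans hT.lt_card_s5)

lemma mul_succ_le_sum (hT : IsCore_s5 G k T) (hTN : T ⊆ N) :
    k * (k + 1) ≤ ∑ v ∈ N, #(nbrsIn G N v) :=
  calc k * (k + 1) ≤ k * #T := Nat.mul_le_mul_left k hT.lt_card_s5
    _ ≤ ∑ v ∈ T, #(nbrsIn G T v) := hT.mul_card_le_sum
    _ ≤ ∑ v ∈ T, #(nbrsIn G N v) := sum_le_sum fun v _ ↦ card_le_card (nbrsIn_mono hTN v)
    _ ≤ ∑ v ∈ N, #(nbrsIn G N v) := sum_le_sum_of_subset hTN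

end IsCore_s5

end Core

section Exchange

variable {V : Type*} [DecidableEq V] {G : SimpleGraph V} [DecidableRel G.Adj]
  {N R K X : Finset V} {a v w x y : V} {k : ℕ}

/-- The set `(N \ X) ∪ N_R(X)` obtained from `N` by exchanging `X` with its neighbours in `R`. -/
def exchange (G : SimpleGraph V) [DecidableRel G.Adj] (N R X : Finset V) : Finset V :=
  (N \ X) ∪ nbrSetIn G R X

lemma mem_exchange : v ∈ exchange G N R X ↔ v ∈ N ∧ v ∉ X ∨ v ∈ nbrSetIn G R X := by
  rw [exchange, mem_union, mem_sdiff]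

lemma exchange_empty (N R : Finset V) : exchange G N R ∅ = N := by
  simp [exchange, nbrSetIn]

lemma exchange_singleton (hv : nbrsIn G R v = {a}) :
    exchange G N R {v} = insert a (N.erase v) := by
  rw [exchange, nbrSetIn_singleton, hv, sdiff_singleton_eq_erase, union_comm, singleton_union]

/-- What the absence of small and of `(k - 1)`-degenerate cuts says about a neighbourhood `N` and
the vertices `R` adjacent to it: Hall's condition from `N` to `R`, and a core of minimum degree `k`
in every exchange. -/
structure IsExchangeResistant (G : SimpleGraph V) [DecidableRel G.Adj] (k : ℕ)
    (N R : Finset V) : Prop where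
  card_le : ∀ X ⊆ N, #X ≤ #(nbrSetIn G R X)
  exists_isCore : ∀ X ⊆ N, ∃ T ⊆ exchange G N R X, IsCore_s5 G k T

namespace IsExchangeResistant

lemma one_le_card_nbrsIn (h : IsExchangeResistant G k N R) (hv : v ∈ N) :
    1 ≤ #(nbrsIn G R v) := by
  simpa using h.card_le {v} (singleton_subset_iff.2 hv)

lemma isClique_erase (h : IsExchangeResistant G 3 N R) (hN : #N = 5)
    (hNR : ∑ v ∈ N, #(nbrsIn G R v) ≤ 7) (hv : v ∈ N) (hvR : #(nbrsIn G R v) = 1) :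
    G.IsClique (N.erase v) := by
  obtain ⟨a, ha⟩ := card_eq_one.1 hvR
  have ⟨haR, hva⟩ : a ∈ R ∧ G.Adj v a := mem_nbrsIn.1 (ha ▸ mem_singleton_self a)
  obtain ⟨T, hTN, hT⟩ := h.exists_isCore {v} (singleton_subset_iff.2 hv)
  rw [exchange_singleton ha] at hTN
  have haT : a ∉ T := by
    intro haT
    have hsub : nbrsIn G T a ⊆ (nbrsIn G N a).erase v := by
      intro z hz
      have hz' := hTN (mem_nbrsIn.1 hz).1
      have hza := (mem_nbrsIn.1 hz).2
      simp only [mem_insert, mem_erase, hza.ne', false_or] at hz'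
      exact mem_erase.2 ⟨hz'.1, mem_nbrsIn.2 ⟨hz'.2, hza⟩⟩
    have hdeg := (hT.le_card_nbrsIn a haT).trans (card_le_card hsub)
    rw [card_erase_of_mem (mem_nbrsIn.2 ⟨hv, hva.symm⟩)] at hdeg
    have hcount := card_nbrSetIn_add_card_nbrsIn_le (G := G) (X := N) haR
    have hhall := h.card_le N Subset.rfl
    omega
  have hcard : #(N.erase v) = 4 := by rw [card_erase_of_mem hv, hN]
  have hTe := hT.eq_of_subset ((subset_insert_iff_of_notMem haT).1 hTN) hcard.le
  exact hTe ▸ hT.isClique (hTe ▸ hcard.le)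

theorem le_sum_of_dense (h : IsExchangeResistant G 3 N R) (hN : #N = 5)
    (hdense : 16 ≤ ∑ v ∈ N, #(nbrsIn G N v)) :
    24 ≤ ∑ v ∈ N, #(nbrsIn G N v) + ∑ v ∈ N, #(nbrsIn G R v) := by
  by_contra! hlt
  have hleaves := two_mul_card_le_sum_add_card_filter_eq_one fun v hv ↦ h.one_le_card_nbrsIn hv
  have hclique : G.IsClique N := by
    refine isClique_of_forall_isClique_diff_singleton
      (Q := {v ∈ N | #(nbrsIn G R v) = 1}) (by omega) fun v hv ↦ ?_
    rw [mem_filter] at hv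
    rw [← coe_erase]
    exact h.isClique_erase hN (by omega) hv.1 hv.2
  have hsum := sum_card_nbrsIn_of_isClique hclique
  have hhall := (h.card_le N Subset.rfl).trans (card_nbrSetIn_le R N)
  rw [hN] at hsum
  omega

lemma exists_nbrsIn_eq_singleton (h : IsExchangeResistant G k N R) (hKN : K ⊆ N)
    (hlt : ∑ v ∈ K, #(nbrsIn G R v) < 2 * #K) : ∃ x ∈ K, ∃ a, nbrsIn G R x = {a} := by
  have hlt' : ∑ v ∈ K, #(nbrsIn G R v) < ∑ v ∈ K, 2 := by
    rwa [sum_const, smul_eq_mul, mul_comm]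
  obtain ⟨x, hx, hxR⟩ := exists_lt_of_sum_lt hlt'
  have hpos := h.one_le_card_nbrsIn (hKN hx)
  exact ⟨x, hx, card_eq_one.1 (by omega)⟩

-- `w` has too few neighbours to lie in the core of the exchange of `x`.
lemma adj_of_nbrsIn_eq_singleton (h : IsExchangeResistant G 3 (insert w K) R) (hK : #K = 4)
    (hwK : #(nbrsIn G K w) ≤ 1) (hwx : w ≠ x) (hx : x ∈ K) (ha : nbrsIn G R x = {a}) :
    ∀ c ∈ K, G.Adj a c := by
  obtain ⟨T, hTN, hT⟩ := h.exists_isCore {x} (singleton_subset_iff.2 (mem_insert_of_mem hx))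
  rw [exchange_singleton ha, erase_insert_of_ne hwx, insert_comm] at hTN
  have hwT : w ∉ T := by
    intro hwT
    have hsub : nbrsIn G T w ⊆ insert a (nbrsIn G K w) := by
      intro z hz
      have hz' := hTN (mem_nbrsIn.1 hz).1
      have hwz := (mem_nbrsIn.1 hz).2
      simp only [mem_insert, mem_erase, hwz.ne', false_or] at hz'
      exact mem_insert.2 (hz'.imp_right fun hzK ↦ mem_nbrsIn.2 ⟨hzK.2, hwz⟩)
    have hdeg := (hT.le_card_nbrsIn w hwT).trans (card_le_card hsub)
    have := card_insert_le a (nbrsIn G K w)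
    omega
  have herase : #(K.erase x) = 3 := by rw [card_erase_of_mem hx, hK]
  have hcard : #(insert a (K.erase x)) ≤ 4 := (card_insert_le _ _).trans (by rw [herase])
  have hTe := hT.eq_of_subset ((subset_insert_iff_of_notMem hwT).1 hTN) hcard
  have haK : a ∉ K.erase x := by
    intro haK
    have hlt := hT.lt_card_s5
    rw [hTe, insert_eq_of_mem haK, herase] at hlt
    omega
  intro c hc
  obtain rfl | hcx := eq_or_ne c x
  · exact (mem_nbrsIn.1 (ha ▸ mem_singleton_self a : a ∈ nbrsIn G R c)).2.symm
  · have hcK : c ∈ K.erase x := mem_erase.2 ⟨hcx, hc⟩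
    refine hT.isClique (hTe ▸ hcard) ?_ ?_ (ne_of_mem_of_not_mem hcK haK).symm
    · exact mem_coe.2 (hTe ▸ mem_insert_self a _)
    · exact mem_coe.2 (hTe ▸ mem_insert_of_mem hcK)

lemma card_nbrsIn_le_one_of_ne (h : IsExchangeResistant G k N R) (hKN : K ⊆ N) (hK : #K = 4)
    (hKR : ∑ v ∈ K, #(nbrsIn G R v) ≤ 7) (haR : a ∈ R) (ha : ∀ c ∈ K, G.Adj a c)
    {z : V} (hzR : z ∈ R) (hza : z ≠ a) : #(nbrsIn G K z) ≤ 1 := by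
  have hhall := h.card_le K hKN
  have hcount := card_nbrSetIn_add_sum_le (G := G) (X := K)
    (insert_subset haR (singleton_subset_iff.2 hzR))
  rw [sum_pair hza.symm, card_pair hza.symm, nbrsIn_eq_self_iff.2 ha] at hcount
  omega

lemma three_le_card_nbrsIn (h : IsExchangeResistant G 3 (insert w K) R) (hK : #K = 4)
    (hwK : ∀ c ∈ K, ¬ G.Adj w c) (hx : x ∈ K) (hy : y ∈ K) (hxy : x ≠ y)
    (hxa : nbrsIn G R x = {a}) (ha : ∀ c ∈ K, G.Adj a c)
    (hR : ∀ z ∈ R, z ≠ a → #(nbrsIn G K z) ≤ 1) : 3 ≤ #(nbrsIn G R y) := by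
  have haR : a ∈ R := (mem_nbrsIn.1 (hxa ▸ mem_singleton_self a)).1
  have hpair : {x, y} ⊆ K := insert_subset hx (singleton_subset_iff.2 hy)
  have hnbrs : nbrSetIn G R {x, y} = nbrsIn G R y := by
    rw [nbrSetIn, biUnion_insert, singleton_biUnion, hxa, union_eq_right, singleton_subset_iff]
    exact mem_nbrsIn.2 ⟨haR, (ha y hy).symm⟩
  obtain ⟨T, hTN, hT⟩ := h.exists_isCore {x, y} (hpair.trans (subset_insert w K))
  have hTcases : ∀ z ∈ T, z = w ∨ z ∈ K \ {x, y} ∨ z ∈ nbrsIn G R y := by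
    intro z hz
    have hz' := mem_exchange.1 (hTN hz)
    rw [hnbrs, mem_insert] at hz'
    rw [mem_sdiff]
    tauto
  have hKT : ∀ c ∈ K \ {x, y}, c ∉ T := by
    intro c hc hcT
    have ⟨hcK, hcxy⟩ := mem_sdiff.1 hc
    have hsub : nbrsIn G T c ⊆ insert a ((K \ {x, y}).erase c) := by
      intro z hz
      have ⟨hzT, hcz⟩ := mem_nbrsIn.1 hz
      rw [mem_insert, mem_erase]
      obtain rfl | hzK | hzy := hTcases z hzT
      · exact absurd hcz.symm (hwK c hcK)
      · exact Or.inr ⟨hcz.ne', hzK⟩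
      · have ⟨hzR, hyz⟩ := mem_nbrsIn.1 hzy
        by_contra! hza
        have hcy : c = y := card_le_one.1 (hR z hzR hza.1) c (mem_nbrsIn.2 ⟨hcK, hcz.symm⟩)
          y (mem_nbrsIn.2 ⟨hy, hyz.symm⟩)
        simp [hcy] at hcxy
    have hdeg := (hT.le_card_nbrsIn c hcT).trans ((card_le_card hsub).trans (card_insert_le _ _))
    rw [card_erase_of_mem hc, card_sdiff_of_subset hpair, card_pair hxy, hK] at hdeg
    omega
  have hTsub : T ⊆ insert w (nbrsIn G R y) := by
    intro z hz
    rw [mem_insert]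
    exact (hTcases z hz).imp_right fun hz' ↦ hz'.resolve_left fun hzK ↦ hKT z hzK hz
  have hcard := hT.lt_card_s5.trans_le ((card_le_card hTsub).trans (card_insert_le _ _))
  omega

lemma eight_le_sum_add_card_nbrsIn (h : IsExchangeResistant G 3 (insert w K) R) (hw : w ∉ K)
    (hK : #K = 4) (hwK : #(nbrsIn G K w) ≤ 1) :
    8 ≤ ∑ v ∈ K, #(nbrsIn G R v) + #(nbrsIn G K w) := by
  by_contra! hlt
  have hKN := subset_insert w K
  obtain ⟨x, hx, a, hxa⟩ := h.exists_nbrsIn_eq_singleton hKN (by omega)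
  have haR : a ∈ R := (mem_nbrsIn.1 (hxa ▸ mem_singleton_self a)).1
  have ha := h.adj_of_nbrsIn_eq_singleton hK hwK (ne_of_mem_of_not_mem hx hw).symm hx hxa
  have hhall := h.card_le K hKN
  have hcount := card_nbrSetIn_add_card_nbrsIn_le (G := G) (X := K) haR
  rw [nbrsIn_eq_self_iff.2 ha] at hcount
  have hwK0 : #(nbrsIn G K w) = 0 := by omega
  have hwK' : ∀ c ∈ K, ¬ G.Adj w c := filter_eq_empty_iff.1 (card_eq_zero.1 hwK0)
  have hthree : ∀ y ∈ K.erase x, 3 ≤ #(nbrsIn G R y) := by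
    intro y hy
    rw [mem_erase] at hy
    exact h.three_le_card_nbrsIn hK hwK' hx hy.2 hy.1.symm hxa ha fun z hzR hza ↦
      h.card_nbrsIn_le_one_of_ne hKN hK (by omega) haR ha hzR hza
  have hsum := card_nsmul_le_sum _ _ _ hthree
  rw [card_erase_of_mem hx, hK, smul_eq_mul] at hsum
  have := add_sum_erase K (fun v ↦ #(nbrsIn G R v)) hx
  simp only [hxa, card_singleton] at this
  omega

theorem le_sum_of_isClique (h : IsExchangeResistant G 3 (insert w K) R) (hw : w ∉ K)
    (hK : #K = 4) (hclique : G.IsClique K)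
    (hdeg : 4 ≤ #(nbrsIn G (insert w K) w) + #(nbrsIn G R w)) :
    24 ≤ ∑ v ∈ insert w K, #(nbrsIn G (insert w K) v) + ∑ v ∈ insert w K, #(nbrsIn G R v) := by
  have hsum := sum_card_nbrsIn_insert (G := G) hw
  rw [sum_card_nbrsIn_of_isClique hclique, hK] at hsum
  obtain hwK | hwK := le_or_gt (#(nbrsIn G K w)) 1
  · have hKR := h.eight_le_sum_add_card_nbrsIn hw hK hwK
    rw [nbrsIn_insert_self] at hdeg
    rw [hsum, sum_insert hw]
    omega
  · exact h.le_sum_of_dense (by rw [card_insert_of_notMem hw, hK]) (by omega)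

theorem le_sum (h : IsExchangeResistant G 3 N R) (hN : #N = 5)
    (hdeg : ∀ v ∈ N, 4 ≤ #(nbrsIn G N v) + #(nbrsIn G R v)) :
    24 ≤ ∑ v ∈ N, #(nbrsIn G N v) + ∑ v ∈ N, #(nbrsIn G R v) := by
  obtain ⟨T, hTN, hT⟩ := h.exists_isCore ∅ (empty_subset N)
  rw [exchange_empty] at hTN
  obtain hT4 | hT5 : #T = 4 ∨ 5 ≤ #T := by
    have := hT.lt_card_s5
    omega
  · obtain ⟨w, hw, rfl⟩ := exists_eq_insert_iff.2 ⟨hTN, by omega⟩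
    exact h.le_sum_of_isClique hw hT4 (hT.isClique hT4.le) (hdeg w (mem_insert_self w T))
  · obtain rfl := eq_of_subset_of_card_le hTN (by omega)
    have hfifteen := hT.mul_card_le_sum
    obtain ⟨m, hm⟩ := even_sum_card_nbrsIn (G := G) T
    exact h.le_sum_of_dense hN (by omega)

end IsExchangeResistant

end Exchange

section Cutset

variable {V : Type*} {G : SimpleGraph V}

lemma exists_notMem_of_card_lt_enatCard {s : Finset V} (hs : #s < ENat.card V) :
    ∃ b, b ∉ s := by
  by_contra! hmem
  rw [← Set.encard_univ, ← Set.eq_univ_of_forall (s := (s : Set V)) hmem,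
    Set.encard_coe_eq_coe_finsetCard] at hs
  exact hs.false

lemma isCutset_of_forall_adj {A S : Set V} {a b : V} (hAS : Disjoint A S)
    (hadj : ∀ x ∈ A, ∀ y, G.Adj x y → y ∈ A ∪ S) (ha : a ∈ A) (hb : b ∉ A ∪ S) :
    G.IsCutset S := by
  intro hconn
  rw [Set.mem_union, not_or] at hb
  obtain ⟨p⟩ := hconn ⟨a, hAS.notMem_of_mem_left ha⟩ ⟨b, hb.2⟩
  obtain ⟨d, -, hfst, hsnd⟩ := p.exists_boundary_dart (Subtype.val ⁻¹' A) ha hb.1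
  exact (hadj _ hfst _ d.adj).elim hsnd d.snd.2

variable [G.LocallyFinite]

lemma le_degree_of_forall_isCutset {k : ℕ} (hk : k < ENat.card V)
    (hconn : ∀ S : Finset V, G.IsCutset S → k ≤ #S) (v : V) : k ≤ G.degree v := by
  classical
  by_contra! hlt
  have hcard : #(insert v (G.neighborFinset v)) ≤ k :=
    (card_insert_le _ _).trans (by rwa [G.card_neighborFinset_eq_degree])
  obtain ⟨b, hb⟩ := exists_notMem_of_card_lt_enatCard ((Nat.cast_le.2 hcard).trans_lt hk)
  have hcut : G.IsCutset (G.neighborFinset v) := by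
    refine isCutset_of_forall_adj (A := {v}) (a := v) (b := b) ?_ ?_ rfl ?_
    · simp
    · rintro x rfl y hxy
      simp [hxy]
    · simpa using hb
  have := hconn _ hcut
  rw [G.card_neighborFinset_eq_degree] at this
  omega

end Cutset

section SecondNbrs

variable {V : Type*} [DecidableEq V] {G : SimpleGraph V} [G.LocallyFinite]
  {X : Finset V} {u v : V} {k : ℕ}

/-- The set of vertices at distance two from `u`. -/
def secondNbrs (G : SimpleGraph V) [G.LocallyFinite] (u : V) : Finset V :=
  (G.neighborFinset u).biUnion (fun v ↦ G.neighborFinset v) \ insert u (G.neighborFinset u)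

lemma mem_secondNbrs :
    v ∈ secondNbrs G u ↔ (∃ w, G.Adj u w ∧ G.Adj w v) ∧ v ≠ u ∧ ¬ G.Adj u v := by
  simp [secondNbrs]

variable [DecidableRel G.Adj]

lemma degree_eq_of_adj (huv : G.Adj u v) :
    G.degree v
      = 1 + (#(nbrsIn G (G.neighborFinset u) v) + #(nbrsIn G (secondNbrs G u) v)) := by
  have hnbrs : G.neighborFinset v
      = insert u (nbrsIn G (G.neighborFinset u) v ∪ nbrsIn G (secondNbrs G u) v) := by
    ext z
    have hz : G.Adj v z → ∃ w, G.Adj u w ∧ G.Adj w z := fun hvz ↦ ⟨v, huv, hvz⟩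
    obtain rfl | hzu := eq_or_ne z u
    · simp [huv.symm]
    · simp only [SimpleGraph.mem_neighborFinset, mem_insert, mem_union, mem_nbrsIn,
        mem_secondNbrs]
      tauto
  have hdisj : Disjoint (nbrsIn G (G.neighborFinset u) v) (nbrsIn G (secondNbrs G u) v) := by
    simp only [disjoint_left, mem_nbrsIn, mem_secondNbrs, SimpleGraph.mem_neighborFinset]
    tauto
  have hu : u ∉ nbrsIn G (G.neighborFinset u) v ∪ nbrsIn G (secondNbrs G u) v := by
    simp [mem_secondNbrs]
  rw [← G.card_neighborFinset_eq_degree, hnbrs, card_insert_of_notMem hu,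
    card_union_of_disjoint hdisj, add_comm]

lemma sum_degree_neighborFinset (u : V) :
    ∑ v ∈ G.neighborFinset u, G.degree v
      = G.degree u + (∑ v ∈ G.neighborFinset u, #(nbrsIn G (G.neighborFinset u) v)
        + ∑ v ∈ G.neighborFinset u, #(nbrsIn G (secondNbrs G u) v)) := by
  rw [sum_congr rfl fun v hv ↦ degree_eq_of_adj ((G.mem_neighborFinset u v).1 hv),
    sum_add_distrib, sum_add_distrib, sum_const, G.card_neighborFinset_eq_degree, smul_eq_mul,
    mul_one]

lemma isCutset_exchange (hX : X ⊆ G.neighborFinset u)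
    (hcard : ↑(G.degree u + 1 + #(nbrSetIn G (secondNbrs G u) X)) < ENat.card V) :
    G.IsCutset (exchange G (G.neighborFinset u) (secondNbrs G u) X) := by
  have hX' : ∀ x ∈ X, G.Adj u x := fun x hx ↦ (G.mem_neighborFinset u x).1 (hX hx)
  obtain ⟨b, hb⟩ : ∃ b, b ∉ insert u (G.neighborFinset u) ∪ nbrSetIn G (secondNbrs G u) X := by
    refine exists_notMem_of_card_lt_enatCard (lt_of_le_of_lt (Nat.cast_le.2 ?_) hcard)
    refine (card_union_le _ _).trans (Nat.add_le_add_right ?_ _)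
    exact (card_insert_le _ _).trans (by rw [G.card_neighborFinset_eq_degree])
  refine isCutset_of_forall_adj (A := insert u (X : Set V)) (a := u) (b := b) ?_ ?_
    (Set.mem_insert _ _) ?_
  · simp only [Set.disjoint_left, Set.mem_insert_iff, mem_coe, mem_exchange, mem_nbrSetIn,
      mem_secondNbrs, SimpleGraph.mem_neighborFinset]
    rintro x (rfl | hx)
    · simp
    · have := hX' x hx
      tauto
  · simp only [Set.mem_union, Set.mem_insert_iff, mem_coe, mem_exchange, mem_nbrSetIn,
      mem_secondNbrs, SimpleGraph.mem_neighborFinset]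
    rintro x (rfl | hx) y hxy
    · tauto
    · have hy : ∃ x ∈ X, G.Adj x y := ⟨x, hx, hxy⟩
      have hy' : ∃ w, G.Adj u w ∧ G.Adj w y := ⟨x, hX' x hx, hxy⟩
      tauto
  · simp only [mem_union, mem_insert, not_or, SimpleGraph.mem_neighborFinset] at hb
    simp only [Set.mem_union, Set.mem_insert_iff, mem_coe, mem_exchange,
      SimpleGraph.mem_neighborFinset]
    have := hX' b
    tauto

lemma isExchangeResistant_neighborFinset
    (hcard : ↑(G.degree u + 1 + ∑ v ∈ G.neighborFinset u, #(nbrsIn G (secondNbrs G u) v))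
      < ENat.card V)
    (hconn : ∀ S : Finset V, G.IsCutset S → G.degree u ≤ #S)
    (hcut : ∀ S : Finset V, G.IsCutset S → ¬ G.DegenSet k S) :
    IsExchangeResistant G (k + 1) (G.neighborFinset u) (secondNbrs G u) := by
  have hexchange : ∀ X ⊆ G.neighborFinset u,
      G.IsCutset (exchange G (G.neighborFinset u) (secondNbrs G u) X) := by
    intro X hX
    refine isCutset_exchange hX (lt_of_le_of_lt (Nat.cast_le.2 ?_) hcard)
    exact Nat.add_le_add_left ((card_nbrSetIn_le _ X).trans (sum_le_sum_of_subset hX)) _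
  refine ⟨fun X hX ↦ ?_, fun X hX ↦ exists_isCore_of_not_degenSet_s5 (hcut _ (hexchange X hX))⟩
  have hle := (hconn _ (hexchange X hX)).trans (card_union_le _ _)
  have hXle := card_le_card hX
  rw [card_sdiff_of_subset hX] at hle
  rw [G.card_neighborFinset_eq_degree] at hle hXle
  omega

end SecondNbrs

lemma exists_isCore_neighborFinset {V : Type*} {G : SimpleGraph V} [G.LocallyFinite]
    [DecidableRel G.Adj] {u : V} {k : ℕ} (hcard : ↑(G.degree u + 1) < ENat.card V)
    (hcut : ∀ S : Finset V, G.IsCutset S → ¬ G.DegenSet k S) :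
    ∃ T ⊆ G.neighborFinset u, IsCore_s5 G (k + 1) T := by
  classical
  have hexchange := isCutset_exchange (G := G) (empty_subset _) (by simpa [nbrSetIn] using hcard)
  rw [exchange_empty] at hexchange
  exact exists_isCore_of_not_degenSet_s5 (hcut _ hexchange)

theorem stmt5_general {V : Type*} (G : SimpleGraph V) [G.LocallyFinite]
    (hn : 18 ≤ ENat.card V)
    (hconn : ∀ S : Finset V, G.IsCutset S → 5 ≤ #S)
    (hcut : ∀ S : Finset V, G.IsCutset S → ¬ G.DegenSet 2 S) (u : V) (hu : G.degree u = 5) :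
    29 ≤ ∑ v ∈ G.neighborFinset u, G.degree v := by
  classical
  by_contra! hlt
  have lt_card_s5 {m : ℕ} (hm : m < 18) : m < ENat.card V := (Nat.cast_lt.2 hm).trans_le hn
  rw [sum_degree_neighborFinset, hu] at hlt
  obtain ⟨T, hTN, hT⟩ := exists_isCore_neighborFinset (u := u) (lt_card_s5 (by omega)) hcut
  have htwelve := hT.mul_succ_le_sum hTN
  have hres := isExchangeResistant_neighborFinset (u := u) (lt_card_s5 (by omega))
    (by rwa [hu]) hcut
  have hle := hres.le_sum (by rw [G.card_neighborFinset_eq_degree, hu]) fun v hv ↦ by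
    have hdeg := le_degree_of_forall_isCutset (lt_card_s5 (by omega)) hconn v
    rw [degree_eq_of_adj ((G.mem_neighborFinset u v).1 hv)] at hdeg
    omega
  omega

theorem stmt5 {V : Type*} [Fintype V] (G : SimpleGraph V) [DecidableRel G.Adj]
    (hn : 18 ≤ Fintype.card V)
    (hconn : ∀ S : Set V, (G.IsCutset S ∨ (Sᶜ : Set V).ncard = 1) → 5 ≤ S.ncard)
    (hcut : ¬ ∃ S : Set V, G.IsCutset S ∧ G.DegenSet 2 S)
    (u : V) (hu : G.degree u = 5) :
    29 ≤ ∑ v ∈ G.neighborFinset u, G.degree v :=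
  stmt5_general G (by simpa using hn) (fun S hS ↦ by simpa using hconn S (.inl hS))
    (fun S hS hdegen ↦ hcut ⟨S, hS, hdegen⟩) u hu
end
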